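/- arXiv:1207.2815 — 5 statements merged into one kernel-verified Lean document; each statement's English description precedes it below -/
import Mathlib

section
/- The spanning tree constant of the square lattice, given by the double integral (1/(4π²)) ∫_{-π}^{π} ∫_{-π}^{π} log(4 − 2(cos k₁ + cos k₂)) dk₁ dk₂, equals 4G/π, where G is Catalan's constant. -/
/-!
Write `4 - 2 cos k₁ = 2 cosh t` with `t = 2 arsinh |sin (k₁ / 2)|`. For `k₁ ≠ 0` this `t` is positive,
and Jensen's formula for `z - eᵗ` on the unit circle gives
`∫ log (2 cosh t - 2 cos k₂) dk₂ = 2 π t` over a period (`integral_log_inner`). By symmetry and the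
substitution `u = k₁ / 2`, the claim becomes `∫ arsinh (sin u) du = G` over `[0, π / 2]`
(`integral_arsinh_sin`).

For the latter, `arsinh (sin u)` is the integral over `a ∈ [0, 1]` of `sin u / √(1 + a² sin² u)`.
Exchanging the integrals, the `u`-integral is elementary and equals `arctan a / a`
(`integral_sin_div_sqrt`). Integrating the power series of `arctan a / a` termwise over `[0, 1]`
yields `∑ (-1)ⁿ / (2n + 1)² = G` (`integral_arctan_div`).
-/

open Real

/-- Catalan's constant `G = ∑_{n=0}^∞ (−1)ⁿ/(2n+1)²`. -/
noncomputable def catalanG : ℝ := ∑' n : ℕ, (-1 : ℝ) ^ n / (2 * (n : ℝ) + 1) ^ 2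

/-- Jensen's formula for `z - a`: on the unit circle `|z - a|² = a (a + a⁻¹ - 2 cos k)`, and the
circle average of `log |z - a|` is `log a`. -/
lemma integral_log_add_inv_sub_two_cos {a : ℝ} (ha : 1 < a) :
    ∫ k in (-π)..π, log (a + a⁻¹ - 2 * cos k) = 2 * π * log a := by
  have ha0 : 0 < a := by linarith
  have hav := circleAverage_log_norm_sub_const_eq_posLog (a := (a : ℂ))
  have hns : ∀ k : ℝ, ‖circleMap 0 1 k - (a : ℂ)‖ ^ 2 = a * (a + a⁻¹ - 2 * cos k) := by
    intro k
    have h1 : circleMap 0 1 k = (cos k : ℂ) + (sin k : ℂ) * Complex.I := by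
      simp [circleMap, Complex.exp_mul_I]
    have h2 : a * (a + a⁻¹ - 2 * cos k) = a ^ 2 + 1 - 2 * a * cos k := by field_simp
    rw [h2, Complex.sq_norm, h1, Complex.normSq_apply]
    simp only [Complex.add_re, Complex.sub_re, Complex.mul_re, Complex.ofReal_re, Complex.I_re,
      Complex.ofReal_im, Complex.I_im, Complex.add_im, Complex.sub_im, Complex.mul_im]
    linear_combination sin_sq_add_cos_sq k
  have hpos : ∀ k : ℝ, 0 < ‖circleMap 0 1 k - (a : ℂ)‖ := by
    intro k
    rw [norm_pos_iff, sub_ne_zero]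
    intro h
    have := congrArg norm h
    simp [abs_of_pos ha0] at this
    linarith
  have hlog : ∀ k : ℝ, log (a + a⁻¹ - 2 * cos k)
      = 2 * log ‖circleMap 0 1 k - (a : ℂ)‖ - log a := by
    intro k
    have h := hns k
    have h3 : a + a⁻¹ - 2 * cos k = ‖circleMap 0 1 k - (a : ℂ)‖ ^ 2 / a := by
      rw [h]; field_simp
    rw [h3, log_div (pow_ne_zero _ (hpos k).ne') ha0.ne', log_pow]
    norm_num
  have hcont : Continuous fun k : ℝ => log ‖circleMap 0 1 k - (a : ℂ)‖ :=
    Continuous.log (by fun_prop) fun k => (hpos k).ne'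
  rw [Real.circleAverage_eq_integral_add (-π), intervalIntegral.integral_comp_add_right
    (fun k => log ‖circleMap 0 1 k - (a : ℂ)‖)] at hav
  rw [show 0 + -π = -π by ring, show 2 * π + -π = π by ring, smul_eq_mul,
    posLog_eq_log (by simpa [abs_of_pos ha0] using ha.le), Complex.norm_real,
    norm_eq_abs, abs_of_pos ha0,
    inv_mul_eq_iff_eq_mul₀ (by positivity)] at hav
  simp_rw [hlog]
  rw [intervalIntegral.integral_sub ((hcont.const_mul 2).intervalIntegrable _ _) (by simp),
    intervalIntegral.integral_const_mul, hav, intervalIntegral.integral_const, smul_eq_mul]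
  ring

/-- The inner integral, from the choice `a = exp (2 arsinh |sin (k / 2)|)`, for which
`a + a⁻¹ = 2 cosh (2 arsinh |sin (k / 2)|) = 4 - 2 cos k`. -/
lemma integral_log_inner {k : ℝ} (hk : sin (k / 2) ≠ 0) :
    ∫ k₂ in (-π)..π, log (4 - 2 * (cos k + cos k₂)) = 4 * π * arsinh |sin (k / 2)| := by
  set s := |sin (k / 2)| with hs
  have hs0 : 0 < s := abs_pos.2 hk
  have h := integral_log_add_inv_sub_two_cos (a := exp (2 * arsinh s))
    (by rw [one_lt_exp_iff]; have := arsinh_pos_iff.2 hs0; positivity)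
  have h2 : exp (2 * arsinh s) + (exp (2 * arsinh s))⁻¹ = 4 - 2 * cos k := by
    have h3 : exp (2 * arsinh s) + (exp (2 * arsinh s))⁻¹ = 2 * cosh (2 * arsinh s) := by
      rw [cosh_eq, exp_neg]; ring
    have h4 : cos k = 1 - 2 * sin (k / 2) ^ 2 := by
      have h5 := cos_two_mul (k / 2)
      rw [mul_div_cancel₀ k two_ne_zero] at h5
      linear_combination h5 + 2 * sin_sq_add_cos_sq (k / 2)
    rw [h3, h4, cosh_two_mul, cosh_sq, sinh_arsinh, hs, sq_abs]; ring
  rw [h2, log_exp] at h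
  rw [show 4 * π * arsinh s = 2 * π * (2 * arsinh s) by ring, ← h]
  congr 1; ext x; ring_nf

/-- An antiderivative of the integrand is `-arctan (a cos u / √(1 + a² sin² u)) / a`. -/
lemma integral_sin_div_sqrt {a : ℝ} (ha : 0 < a) :
    ∫ u in (0 : ℝ)..(π / 2), sin u / √(1 + (a * sin u) ^ 2) = arctan a / a := by
  have hp : ∀ u : ℝ, 0 < 1 + (a * sin u) ^ 2 := fun u => by positivity
  have hd : ∀ u ∈ Set.uIcc (0 : ℝ) (π / 2), HasDerivAt
      (fun u => -(arctan (a * cos u / √(1 + (a * sin u) ^ 2)) / a))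
      (sin u / √(1 + (a * sin u) ^ 2)) u := by
    intro u _
    have hs := (((((hasDerivAt_sin u).const_mul a).pow 2).const_add 1).sqrt (hp u).ne')
    have hq := (((hasDerivAt_cos u).const_mul a).div hs (sqrt_pos.2 (hp u)).ne')
    refine ((hq.arctan.div_const a).neg).congr_deriv ?_
    have hS := sq_sqrt (hp u).le
    have hSp := sqrt_pos.2 (hp u)
    have hc : cos u ^ 2 = 1 - sin u ^ 2 := by linear_combination sin_sq_add_cos_sq u
    simp only [Pi.div_apply, Pi.pow_apply]
    set S := √(1 + (a * sin u) ^ 2) with hSd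
    have h1 : 1 + (a * cos u / S) ^ 2 = (1 + a ^ 2) / S ^ 2 := by
      field_simp
      rw [hS, hc]; ring
    rw [h1]
    have h2 : (1 + a ^ 2) ≠ 0 := by positivity
    field_simp
    simp only [Nat.cast_ofNat]
    rw [hc, hS]; ring
  have hc : Continuous fun u : ℝ => sin u / √(1 + (a * sin u) ^ 2) :=
    continuous_sin.div (by fun_prop) fun u => (sqrt_pos.2 (hp u)).ne'
  rw [intervalIntegral.integral_eq_sub_of_hasDerivAt hd (hc.intervalIntegrable _ _)]
  simp

lemma arsinh_eq_integral (x : ℝ) :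
    arsinh x = ∫ a in (0 : ℝ)..1, x / √(1 + (a * x) ^ 2) := by
  have hd : ∀ a ∈ Set.uIcc (0 : ℝ) 1, HasDerivAt (fun a => arsinh (a * x))
      (x / √(1 + (a * x) ^ 2)) a := by
    intro a _
    refine ((hasDerivAt_id a).mul_const x).arsinh.congr_deriv ?_
    simp [div_eq_inv_mul]
  have hc : Continuous fun a : ℝ => x / √(1 + (a * x) ^ 2) :=
    continuous_const.div (by fun_prop) fun u => (sqrt_pos.2 (by positivity)).ne'
  rw [intervalIntegral.integral_eq_sub_of_hasDerivAt hd (hc.intervalIntegrable _ _)]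
  simp

/-- Termwise integration of the power series of `arctan`. -/
lemma integral_arctan_div : ∫ a in (0 : ℝ)..1, arctan a / a = catalanG := by
  have hi : ∀ n : ℕ, ∫ a in (0 : ℝ)..1, a ^ (2 * n) = 1 / (2 * (n : ℝ) + 1) := by
    intro n; rw [integral_pow]; simp
  have hsum : Summable fun n : ℕ => 1 / (2 * (n : ℝ) + 1) ^ 2 := by
    have := (Real.summable_one_div_nat_pow (p := 2)).2 one_lt_two
    have h := this.comp_injective (i := fun n : ℕ => 2 * n + 1) (fun a b h => by simpa using h)
    refine h.congr fun n => ?_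
    simp
  have key := MeasureTheory.hasSum_integral_of_summable_integral_norm
    (μ := MeasureTheory.volume.restrict (Set.Ioc (0 : ℝ) 1))
    (F := fun (n : ℕ) a => (-1 : ℝ) ^ n / (2 * (n : ℝ) + 1) * a ^ (2 * n)) ?_ ?_
  · rw [intervalIntegral.integral_of_le zero_le_one, catalanG]
    refine Eq.trans ?_ (key.tsum_eq.symm.trans ?_)
    rotate_left
    · apply tsum_congr
      intro n
      rw [← intervalIntegral.integral_of_le zero_le_one, intervalIntegral.integral_const_mul, hi]
      field_simp
    · apply MeasureTheory.integral_congr_ae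
      -- The series for `arctan` is available in the library for `|a| < 1` only.
      have h1 : ∀ᵐ a : ℝ, a ≠ 1 := by simp [MeasureTheory.ae_iff]
      filter_upwards [MeasureTheory.ae_restrict_mem measurableSet_Ioc,
        MeasureTheory.ae_restrict_of_ae h1] with a ha ha1
      have hlt : ‖a‖ < 1 := by
        rw [norm_eq_abs, abs_of_pos ha.1]; exact lt_of_le_of_ne ha.2 ha1
      have := (Real.hasSum_arctan hlt).div_const a
      rw [← this.tsum_eq]
      apply tsum_congr
      intro n
      have := ha.1.ne'
      rw [pow_succ]; push_cast; field_simp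
  · intro n
    exact ((continuous_const.mul (continuous_pow _)).intervalIntegrable 0 1).1
  · refine hsum.congr fun n => ?_
    rw [← intervalIntegral.integral_of_le zero_le_one]
    have : ∀ a : ℝ, ‖(-1 : ℝ) ^ n / (2 * (n : ℝ) + 1) * a ^ (2 * n)‖
        = 1 / (2 * (n : ℝ) + 1) * a ^ (2 * n) := by
      intro a
      rw [norm_mul, norm_div, norm_pow, norm_neg, norm_one, one_pow, norm_eq_abs, norm_eq_abs,
        abs_of_nonneg (by positivity : (0 : ℝ) ≤ 2 * n + 1), abs_of_nonneg]
      rw [pow_mul]; positivity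
    simp_rw [this]
    rw [intervalIntegral.integral_const_mul, hi]; field_simp

lemma integral_arsinh_sin : ∫ u in (0 : ℝ)..(π / 2), arsinh (sin u) = catalanG := by
  simp_rw [arsinh_eq_integral (sin _)]
  have hc : Continuous (Function.uncurry fun u a : ℝ => sin u / √(1 + (a * sin u) ^ 2)) := by
    simp only [Function.uncurry_def]
    exact Continuous.div (by fun_prop) (by fun_prop) fun p => (sqrt_pos.2 (by positivity)).ne'
  have hint : MeasureTheory.Integrable
      (Function.uncurry fun u a : ℝ => sin u / √(1 + (a * sin u) ^ 2))
      ((MeasureTheory.volume.restrict (Set.uIoc 0 (π / 2))).prod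
        (MeasureTheory.volume.restrict (Set.Ioc 0 1))) := by
    rw [MeasureTheory.Measure.prod_restrict]
    refine MeasureTheory.IntegrableOn.mono_set
      (hc.continuousOn.integrableOn_compact (isCompact_uIcc.prod isCompact_Icc))
      (Set.prod_mono Set.uIoc_subset_uIcc Set.Ioc_subset_Icc_self)
  simp_rw [intervalIntegral.integral_of_le (zero_le_one' ℝ)]
  rw [MeasureTheory.intervalIntegral_integral_swap hint,
    ← intervalIntegral.integral_of_le zero_le_one, ← integral_arctan_div]
  apply intervalIntegral.integral_congr_ae
  filter_upwards with a ha
  rw [Set.uIoc_of_le zero_le_one] at ha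
  exact integral_sin_div_sqrt ha.1

/-- The spanning tree constant of the square lattice equals `4G/π`. -/
theorem square_lattice_spanning_tree_constant :
    (1 / (4 * π ^ 2)) *
      ∫ k₁ in (-π)..π, (∫ k₂ in (-π)..π,
        Real.log (4 - 2 * (Real.cos k₁ + Real.cos k₂))) = 4 * catalanG / π := by
  -- At `k₁ = 0` the inner integrand is singular, so the two sides are compared almost everywhere.
  have h1 : ∫ k₁ in (-π)..π, (∫ k₂ in (-π)..π, log (4 - 2 * (cos k₁ + cos k₂)))
      = ∫ k in (-π)..π, 4 * π * arsinh |sin (k / 2)| := by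
    apply intervalIntegral.integral_congr_ae
    have h0 : ∀ᵐ a : ℝ, a ≠ 0 := by simp [MeasureTheory.ae_iff]
    filter_upwards [h0] with k hk hmem
    rw [Set.uIoc_of_le (by linarith [pi_pos])] at hmem
    apply integral_log_inner
    intro h
    rw [sin_eq_zero_iff_of_lt_of_lt (by linarith [hmem.1, pi_pos]) (by linarith [hmem.2, pi_pos])] at h
    exact hk (by linarith)
  have h2 : ∫ k in (-π)..π, arsinh |sin (k / 2)| = 4 * catalanG := by
    have hc : Continuous fun u : ℝ => arsinh |sin u| :=
      continuous_sin.abs.arsinh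
    rw [intervalIntegral.integral_comp_div (fun u => arsinh |sin u|) two_ne_zero,
      ← intervalIntegral.integral_add_adjacent_intervals (b := 0)
        (hc.intervalIntegrable _ _) (hc.intervalIntegrable _ _)]
    have hr : ∫ u in (0 : ℝ)..(π / 2), arsinh |sin u| = catalanG := by
      rw [← integral_arsinh_sin]
      apply intervalIntegral.integral_congr
      intro u hu
      rw [Set.uIcc_of_le (by positivity)] at hu
      simp only
      rw [abs_of_nonneg (sin_nonneg_of_nonneg_of_le_pi hu.1 (by linarith [hu.2, pi_pos]))]
    have hl : ∫ u in (-π / 2)..0, arsinh |sin u| = catalanG := by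
      rw [← hr, ← neg_zero, neg_div, ← intervalIntegral.integral_comp_neg]
      simp
    rw [hr, hl, smul_eq_mul]; ring
  rw [h1, intervalIntegral.integral_const_mul, h2]
  field_simp
end

section
/- log 4 − (1/8)·₄F₃(1,1,3/2,3/2; 2,2,2; 1) = 4G/π, where G is Catalan's constant. -/
/-!
Write `w n = ∏_{i<n} (2i+1)/(2i+2)`, the Wallis ratio `(1/2)ₙ/n!`. The `n`-th term of
`₄F₃(1,1,3/2,3/2; 2,2,2; 1)` is `4 w(n+1)²/(n+1)` (`F43_term`), so the claim is
`log 4 - (1/2) ∑_{m≥1} w(m)²/m = 4G/π`.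

One factor `w m` is the Wallis integral `(2/π) ∫₀^{π/2} sin^{2m}`. The other one is a coefficient
of the binomial series `∑ w(m) xᵐ = (1-x)^{-1/2}`; dividing by `x` and integrating gives
`∑_{m≥1} w(m) sin^{2m}θ / m = -4 log cos (θ/2)` (`tsum_wallis_sin`). Since `∑ w(m)/m < ∞`, sum and
integral can be exchanged (`hasSum_wallis_sq`), whence
`(π/2) ∑ w(m)²/m = -8 ∫₀^{π/4} log cos`.

The remaining integral follows from the sum and the difference of `∫₀^{π/4} log cos` and
`∫₀^{π/4} log sin`. The sum is `∫₀^{π/2} log sin = -(π/2) log 2`; the second minus the first is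
`∫₀^{π/4} log tan = ∫₀¹ log x/(1+x²) dx = -G`, by expanding the geometric series.
-/

open Real Finset

/-- Pochhammer symbol `(a)ₙ = a(a+1)⋯(a+n−1) = Γ(a+n)/Γ(a)`. -/
noncomputable def poch (a : ℝ) (n : ℕ) : ℝ := ∏ i ∈ Finset.range n, (a + i)

/-- The generalized hypergeometric function `₄F₃(1,1,3/2,3/2; 2,2,2; z)`. -/
noncomputable def F43 (z : ℝ) : ℝ :=
  ∑' n : ℕ, (poch 1 n * poch 1 n * poch (3/2) n * poch (3/2) n) /
      (poch 2 n * poch 2 n * poch 2 n) * z ^ n / (n.factorial : ℝ)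

/-! ### Wallis ratios and the terms of the hypergeometric series -/

/-- The Wallis ratio `∏_{i<n} (2i+1)/(2i+2) = (1/2)ₙ / n! = C(2n,n) / 4ⁿ`. -/
noncomputable def wallis (n : ℕ) : ℝ := ∏ i ∈ range n, (2 * (i : ℝ) + 1) / (2 * i + 2)

lemma wallis_zero : wallis 0 = 1 := by simp [wallis]

lemma wallis_succ (n : ℕ) : wallis (n + 1) = wallis n * ((2 * (n : ℝ) + 1) / (2 * n + 2)) := by
  exact prod_range_succ _ n

lemma wallis_pos (n : ℕ) : 0 < wallis n := by
  unfold wallis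
  exact prod_pos fun i _ => by positivity

lemma wallis_sub_succ (n : ℕ) : wallis n - wallis (n + 1) = wallis n / (2 * ((n : ℝ) + 1)) := by
  rw [wallis_succ]
  field_simp
  ring

lemma wallis_succ_le (n : ℕ) : wallis (n + 1) ≤ wallis n := by
  have h := wallis_sub_succ n
  have : 0 < wallis n / (2 * ((n : ℝ) + 1)) := div_pos (wallis_pos n) (by positivity)
  linarith

lemma wallis_le_one (n : ℕ) : wallis n ≤ 1 := by
  induction n with
  | zero => simp [wallis_zero]
  | succ n ih => exact (wallis_succ_le n).trans ih

/-- The terms are dominated by the telescoping differences `2 (w n - w (n+1))`. -/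
lemma summable_wallis_div : Summable fun n : ℕ => wallis (n + 1) / ((n : ℝ) + 1) := by
  refine summable_of_sum_range_le (c := 2)
    (fun n => div_nonneg (wallis_pos _).le (by positivity)) fun n => ?_
  have key : ∀ n : ℕ, wallis (n + 1) / ((n : ℝ) + 1) ≤ 2 * (wallis n - wallis (n + 1)) := by
    intro n
    rw [wallis_sub_succ]
    have : 2 * (wallis n / (2 * ((n : ℝ) + 1))) = wallis n / ((n : ℝ) + 1) := by
      field_simp
    rw [this]
    gcongr
    exact wallis_succ_le n
  calc ∑ i ∈ range n, wallis (i + 1) / ((i : ℝ) + 1)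
      ≤ ∑ i ∈ range n, 2 * (wallis i - wallis (i + 1)) := sum_le_sum fun i _ => key i
    _ = 2 * (wallis 0 - wallis n) := by rw [← mul_sum, sum_range_sub']
    _ ≤ 2 := by rw [wallis_zero]; linarith [wallis_pos n]

lemma poch_one (n : ℕ) : poch 1 n = n.factorial := by
  induction n with
  | zero => simp [poch]
  | succ n ih =>
    unfold poch at ih ⊢
    rw [prod_range_succ, ih, Nat.factorial_succ]
    push_cast
    ring

lemma poch_two (n : ℕ) : poch 2 n = (n + 1).factorial := by
  induction n with
  | zero => simp [poch]
  | succ n ih =>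
    unfold poch at ih ⊢
    rw [prod_range_succ, ih, Nat.factorial_succ (n + 1)]
    push_cast
    ring

lemma poch_three_halves (n : ℕ) :
    poch (3 / 2) n = 2 * (n + 1).factorial * wallis (n + 1) := by
  induction n with
  | zero => simp [poch, wallis]
  | succ n ih =>
    unfold poch at ih ⊢
    rw [prod_range_succ, ih, Nat.factorial_succ (n + 1), wallis_succ (n + 1)]
    push_cast
    field_simp
    ring

lemma F43_term (n : ℕ) :
    (poch 1 n * poch 1 n * poch (3/2) n * poch (3/2) n) /
      (poch 2 n * poch 2 n * poch 2 n) * (1 : ℝ) ^ n / (n.factorial : ℝ) =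
    4 * (wallis (n + 1) / ((n : ℝ) + 1) * wallis (n + 1)) := by
  rw [poch_one, poch_two, poch_three_halves, Nat.factorial_succ]
  have : (n.factorial : ℝ) ≠ 0 := by positivity
  push_cast
  field_simp
  ring

lemma integral_sin_pow_even_half (n : ℕ) :
    ∫ x in 0..(π / 2), sin x ^ (2 * n) = π / 2 * wallis n := by
  induction n with
  | zero => simp [wallis]
  | succ n ih =>
    rw [show 2 * (n + 1) = 2 * n + 2 by ring, integral_sin_pow, ih, wallis_succ]
    simp
    field_simp

/-- Wallis ratios are the coefficients of the binomial series of `(1-x)^{-1/2}`. -/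
lemma wallis_eq_choose (n : ℕ) : Ring.choose ((1 / 2 : ℝ) + n - 1) n = wallis n := by
  have h : Ring.multichoose (1 / 2 : ℝ) n = Ring.choose ((1 / 2 : ℝ) + n - 1) n := by
    rw [Ring.multichoose_eq]
  have h2 := Ring.factorial_nsmul_multichoose_eq_ascPochhammer (1 / 2 : ℝ) n
  rw [← h]
  have h3 : (ascPochhammer ℕ n).smeval (1 / 2 : ℝ) = n.factorial * wallis n := by
    rw [Polynomial.ascPochhammer_smeval_eq_eval]
    clear h h2
    induction n with
    | zero => simp [wallis]
    | succ n ih =>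
      rw [ascPochhammer_succ_eval, ih, wallis_succ, Nat.factorial_succ]
      push_cast
      field_simp
      ring
  rw [h3, nsmul_eq_mul] at h2
  exact mul_left_cancel₀ (by positivity) h2

lemma hasSum_wallis {x : ℝ} (hx : |x| < 1) :
    HasSum (fun n : ℕ => wallis n * x ^ n) (1 / √(1 - x)) := by
  have h := (Real.one_div_one_sub_rpow_hasFPowerSeriesOnBall_zero (1 / 2)).hasSum
    (y := x) (by simpa [enorm_eq_nnnorm] using! hx)
  rw [zero_add, ← Real.sqrt_eq_rpow] at h
  have e : (fun n : ℕ => wallis n * x ^ n) = fun n : ℕ => (FormalMultilinearSeries.ofScalars ℝ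
      (fun n : ℕ => Ring.choose ((1 / 2 : ℝ) + n - 1) n) n) fun _ => x := by
    funext n
    rw [FormalMultilinearSeries.ofScalars_apply_eq, wallis_eq_choose, smul_eq_mul]
  rw [e]
  exact h

/-! ### The generating function of `w(m)/m` -/

lemma hasDerivAt_wallis_log {x : ℝ} (hx : |x| < 1) :
    HasDerivAt (fun y : ℝ => ∑' n : ℕ, wallis (n + 1) / ((n : ℝ) + 1) * y ^ (n + 1))
      (∑' n : ℕ, wallis (n + 1) * x ^ n) x := by
  obtain ⟨r, hxr, hr1⟩ := exists_between hx
  have hr0 : 0 ≤ r := (abs_nonneg x).trans hxr.le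
  refine hasDerivAt_tsum_of_isPreconnected (u := fun n : ℕ => r ^ n) (t := Metric.ball (0 : ℝ) r)
    (y₀ := 0) (g := fun (n : ℕ) (y : ℝ) => wallis (n + 1) / ((n : ℝ) + 1) * y ^ (n + 1))
    (g' := fun (n : ℕ) (y : ℝ) => wallis (n + 1) * y ^ n)
    (summable_geometric_of_lt_one hr0 hr1) Metric.isOpen_ball
    (convex_ball (0 : ℝ) r).isPreconnected (fun n y _ => ?_) (fun n y hy => ?_) ?_ ?_ ?_
  · refine ((hasDerivAt_pow (n + 1) y).const_mul (wallis (n + 1) / ((n : ℝ) + 1))).congr_deriv ?_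
    push_cast
    rw [← mul_assoc, div_mul_cancel₀ _ (by positivity)]
  · have hy' : |y| ≤ r := by simpa using (Metric.mem_ball.1 hy).le
    rw [norm_mul, norm_pow, Real.norm_eq_abs, Real.norm_eq_abs, abs_of_pos (wallis_pos _)]
    calc wallis (n + 1) * |y| ^ n ≤ 1 * r ^ n := by
          gcongr
          exact wallis_le_one _
      _ = r ^ n := one_mul _
  · simpa using (abs_nonneg x).trans_lt hxr
  · simp
  · simpa using hxr

lemma mul_tsum_wallis_succ {x : ℝ} (hx : |x| < 1) :
    x * ∑' n : ℕ, wallis (n + 1) * x ^ n = 1 / √(1 - x) - 1 := by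
  have h := hasSum_wallis hx
  have h2 := h.summable.tsum_eq_zero_add
  rw [h.tsum_eq, wallis_zero] at h2
  rw [h2, ← tsum_mul_left]
  simp [pow_succ]
  exact tsum_congr fun n => by ring

/-- Both sides vanish at `θ = 0` and have derivative `2 tan (θ/2)`: for the left side,
`∑ w(m) sin^{2m}θ = 1 / cos θ` over `m ≥ 0` gives the derivative
`2 (cos θ / sin θ) (1 / cos θ - 1)`. -/
lemma tsum_wallis_sin {θ : ℝ} (h0 : 0 ≤ θ) (h1 : θ < π / 2) :
    ∑' n : ℕ, wallis (n + 1) / ((n : ℝ) + 1) * (sin θ ^ 2) ^ (n + 1) =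
      -4 * log (cos (θ / 2)) := by
  set h : ℝ → ℝ := fun y : ℝ => ∑' n : ℕ, wallis (n + 1) / ((n : ℝ) + 1) * y ^ (n + 1) with hh
  have hd : ∀ t ∈ Set.Ioo (-(π / 2)) (π / 2),
      HasDerivAt (fun t => h (sin t ^ 2) + 4 * log (cos (t / 2))) 0 t := by
    intro t ht
    have hc : 0 < cos t := cos_pos_of_mem_Ioo ht
    have hC : 0 < cos (t / 2) := cos_pos_of_mem_Ioo ⟨by linarith [ht.1], by linarith [ht.2, pi_pos]⟩
    have hlt : |sin t ^ 2| < 1 := by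
      rw [abs_of_nonneg (sq_nonneg _)]
      nlinarith [sin_sq_add_cos_sq t]
    have hm := mul_tsum_wallis_succ hlt
    rw [show 1 - sin t ^ 2 = cos t ^ 2 by linarith [sin_sq_add_cos_sq t], sqrt_sq hc.le] at hm
    have d1 : HasDerivAt (fun t => sin t ^ 2) (2 * sin t * cos t) t := by
      exact ((hasDerivAt_sin t).pow 2).congr_deriv (by simp)
    have d2 := (hasDerivAt_wallis_log hlt).comp t d1
    have d3 : HasDerivAt (fun t : ℝ => cos (t / 2)) (-sin (t / 2) * (1 / 2)) t :=
      ((hasDerivAt_id t).div_const 2).cos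
    have d4 := (d3.log hC.ne').const_mul 4
    refine (d2.add d4).congr_deriv ?_
    generalize (∑' n : ℕ, wallis (n + 1) * (sin t ^ 2) ^ n) = D at hm
    have e1 : sin t = 2 * sin (t / 2) * cos (t / 2) := by
      rw [← sin_two_mul]; congr 1; ring
    have e2 : cos t = 1 - 2 * sin (t / 2) ^ 2 := by
      have := cos_sq' (t / 2)
      rw [show cos t = 2 * cos (t / 2) ^ 2 - 1 by rw [← cos_two_mul]; congr 1; ring]
      linarith
    -- The value `D` is known only up to the factor `sin t ^ 2`, which vanishes at `t = 0`.
    by_cases hS : sin (t / 2) = 0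
    · rw [e1, hS]; simp
    · field_simp at hm ⊢
      have h3 : sin t ^ 2 * cos t * D = 2 * sin (t / 2) ^ 2 := by linarith
      have h4 : sin (t / 2) * (D * sin t * cos t * cos (t / 2)) = sin (t / 2) * sin (t / 2) := by
        rw [e1] at h3 ⊢
        linarith
      have h5 := mul_left_cancel₀ hS h4
      linarith
  have hconst := (convex_Ioo (-(π / 2)) (π / 2)).is_const_of_fderivWithin_eq_zero (𝕜 := ℝ)
    (f := fun t => h (sin t ^ 2) + 4 * log (cos (t / 2)))
    (fun t ht => (hd t ht).differentiableAt.differentiableWithinAt)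
    (fun t ht => by
      rw [fderivWithin_of_isOpen isOpen_Ioo ht]
      simpa using (hd t ht).hasFDerivAt.fderiv)
    (x := θ) (y := 0) ⟨by linarith [pi_pos], h1⟩ ⟨by linarith [pi_pos], by linarith [pi_pos]⟩
  have hz : h 0 = 0 := by simp [hh]
  simp [hz] at hconst
  change h (sin θ ^ 2) = _
  linarith

/-- The series of `tsum_wallis_sin` integrated term by term, each power of `sin` giving a Wallis
integral. -/
lemma hasSum_wallis_sq :
    HasSum (fun n : ℕ => wallis (n + 1) / ((n : ℝ) + 1) * (π / 2 * wallis (n + 1)))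
      (∫ θ in 0..(π / 2), -4 * log (cos (θ / 2))) := by
  have hpi := pi_pos
  have hbd : ∀ (n : ℕ) (t : ℝ),
      ‖wallis (n + 1) / ((n : ℝ) + 1) * (sin t ^ 2) ^ (n + 1)‖ ≤ wallis (n + 1) / ((n : ℝ) + 1) := by
    intro n t
    have h1 : 0 ≤ wallis (n + 1) / ((n : ℝ) + 1) := div_nonneg (wallis_pos _).le (by positivity)
    rw [Real.norm_of_nonneg (by positivity)]
    exact mul_le_of_le_one_right h1 (pow_le_one₀ (sq_nonneg _) (sin_sq_le_one t))
  have key := intervalIntegral.hasSum_integral_of_dominated_convergence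
    (μ := MeasureTheory.volume) (a := 0) (b := π / 2)
    (F := fun (n : ℕ) (t : ℝ) => wallis (n + 1) / ((n : ℝ) + 1) * (sin t ^ 2) ^ (n + 1))
    (f := fun t => -4 * log (cos (t / 2)))
    (fun n _ => wallis (n + 1) / ((n : ℝ) + 1))
    (fun n => (by fun_prop : Continuous _).aestronglyMeasurable)
    (fun n => Filter.Eventually.of_forall fun t _ => hbd n t)
    (Filter.Eventually.of_forall fun t _ => summable_wallis_div)
    (by simp)
    (by
      have hne : ∀ᵐ t : ℝ, t ≠ π / 2 := by
        simp [MeasureTheory.ae_iff]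
      filter_upwards [hne] with t ht hmem
      rw [Set.uIoc_of_le (by positivity)] at hmem
      have hs : Summable fun n : ℕ =>
          wallis (n + 1) / ((n : ℝ) + 1) * (sin t ^ 2) ^ (n + 1) :=
        Summable.of_norm_bounded summable_wallis_div fun n => hbd n t
      rw [← tsum_wallis_sin hmem.1.le (lt_of_le_of_ne hmem.2 ht)]
      exact hs.hasSum)
  have e : (fun n : ℕ => wallis (n + 1) / ((n : ℝ) + 1) * (π / 2 * wallis (n + 1))) = fun n : ℕ =>
      ∫ t in 0..(π / 2), wallis (n + 1) / ((n : ℝ) + 1) * (sin t ^ 2) ^ (n + 1) := by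
    funext n
    rw [intervalIntegral.integral_const_mul, ← integral_sin_pow_even_half]
    simp_rw [pow_mul]
  rw [e]
  exact key

/-! ### The log-trigonometric integrals -/

lemma integral_log_cos_half :
    ∫ θ in 0..(π / 2), -4 * log (cos (θ / 2)) = -8 * ∫ u in 0..(π / 4), log (cos u) := by
  rw [intervalIntegral.integral_const_mul,
    intervalIntegral.integral_comp_div (fun u => log (cos u)) two_ne_zero]
  rw [show π / 2 / 2 = π / 4 by ring, zero_div, smul_eq_mul]
  ring

lemma integral_log_cos_add_log_sin :
    (∫ u in 0..(π / 4), log (cos u)) + ∫ u in 0..(π / 4), log (sin u) = -log 2 * π / 2 := by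
  have h1 : ∫ u in 0..(π / 4), log (cos u) = ∫ u in (π / 4)..(π / 2), log (sin u) := by
    have := intervalIntegral.integral_comp_sub_left (a := 0) (b := π / 4)
      (fun u => log (sin u)) (π / 2)
    simp only [sin_pi_div_two_sub, sub_zero] at this
    rw [this]
    congr 1
    ring
  rw [h1, add_comm, ← integral_log_sin_zero_pi_div_two]
  exact intervalIntegral.integral_add_adjacent_intervals
    intervalIntegrable_log_sin intervalIntegrable_log_sin

lemma intervalIntegrable_pow_mul_log (n : ℕ) :
    IntervalIntegrable (fun x : ℝ => x ^ n * log x) MeasureTheory.volume 0 1 :=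
  intervalIntegral.intervalIntegrable_log'.continuousOn_mul (by fun_prop)

lemma integral_pow_mul_log_unit (n : ℕ) :
    ∫ x in (0 : ℝ)..1, x ^ n * log x = -(1 / ((n : ℝ) + 1) ^ 2) := by
  -- Grouping `x * log x` makes the antiderivative visibly continuous at `0`.
  have hF : ContinuousOn (fun x : ℝ => x ^ n * (x * log x) / ((n : ℝ) + 1)
      - x ^ (n + 1) / ((n : ℝ) + 1) ^ 2) (Set.Icc 0 1) := by
    have := continuous_mul_log
    exact Continuous.continuousOn (by fun_prop)
  rw [intervalIntegral.integral_eq_sub_of_hasDerivAt_of_le zero_le_one hF (fun x hx => ?_)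
    (intervalIntegrable_pow_mul_log n)]
  · simp
  · have hx0 : x ≠ 0 := hx.1.ne'
    have d := (((hasDerivAt_pow (n + 1) x).mul (hasDerivAt_log hx0)).div_const ((n : ℝ) + 1)).sub
      ((hasDerivAt_pow (n + 1) x).div_const (((n : ℝ) + 1) ^ 2))
    refine (d.congr_deriv ?_).congr_of_eventuallyEq (Filter.Eventually.of_forall fun y => ?_)
    · push_cast
      field_simp
      ring
    · simp [pow_succ]
      ring

/-- Expand `1 / (1 + x²)` as a geometric series; the integrals of the absolute values of the terms
sum to `∑ 1 / (2n+1)² < ∞`. -/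
lemma integral_log_div_one_add_sq :
    ∫ x in (0 : ℝ)..1, log x * (1 / (1 + x ^ 2)) = -catalanG := by
  have hnorm : ∀ n : ℕ, ∫ x in Set.Ioc (0 : ℝ) 1, ‖(-1 : ℝ) ^ n * (x ^ (2 * n) * log x)‖ =
      1 / (2 * (n : ℝ) + 1) ^ 2 := by
    intro n
    have h := integral_pow_mul_log_unit (2 * n)
    rw [intervalIntegral.integral_of_le zero_le_one] at h
    push_cast at h
    rw [← neg_eq_iff_eq_neg, ← MeasureTheory.integral_neg] at h
    rw [← h]
    refine MeasureTheory.setIntegral_congr_fun measurableSet_Ioc fun x hx => ?_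
    have : log x ≤ 0 := log_nonpos hx.1.le hx.2
    have h2 : 0 ≤ x ^ (2 * n) := pow_nonneg hx.1.le _
    simp [abs_of_nonpos this, abs_of_pos hx.1]
  have hsum : Summable fun n : ℕ => 1 / (2 * (n : ℝ) + 1) ^ 2 := by
    have h := (Real.summable_one_div_nat_pow (p := 2)).2 one_lt_two
    have h2 := h.comp_injective (i := fun n : ℕ => 2 * n + 1) (fun a b hab => by simpa using hab)
    refine h2.congr fun n => ?_
    simp
  have key := MeasureTheory.hasSum_integral_of_summable_integral_norm
    (μ := MeasureTheory.volume.restrict (Set.Ioc (0 : ℝ) 1))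
    (F := fun (n : ℕ) (x : ℝ) => (-1 : ℝ) ^ n * (x ^ (2 * n) * log x))
    (fun n => (((intervalIntegrable_pow_mul_log (2 * n)).const_mul _).1))
    (by simpa only [hnorm] using hsum)
  have hterm : ∀ n : ℕ, ∫ x in Set.Ioc (0 : ℝ) 1, (-1 : ℝ) ^ n * (x ^ (2 * n) * log x) =
      -((-1 : ℝ) ^ n / (2 * (n : ℝ) + 1) ^ 2) := by
    intro n
    rw [MeasureTheory.integral_const_mul, ← intervalIntegral.integral_of_le zero_le_one,
      integral_pow_mul_log_unit]
    push_cast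
    ring
  simp only [hterm] at key
  have h1 := key.tsum_eq
  rw [tsum_neg] at h1
  rw [catalanG, h1, intervalIntegral.integral_of_le zero_le_one,
    MeasureTheory.integral_Ioc_eq_integral_Ioo, MeasureTheory.integral_Ioc_eq_integral_Ioo]
  -- The endpoint `1`, where the geometric series diverges, has been removed.
  refine MeasureTheory.setIntegral_congr_fun measurableSet_Ioo fun x hx => ?_
  have hlt : ‖-x ^ 2‖ < 1 := by
    rw [norm_neg, norm_pow, Real.norm_of_nonneg hx.1.le]
    exact pow_lt_one₀ hx.1.le hx.2 two_ne_zero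
  have hg := (hasSum_geometric_of_norm_lt_one hlt).mul_left (log x)
  simp only [sub_neg_eq_add] at hg
  rw [one_div, ← hg.tsum_eq]
  refine tsum_congr fun n => ?_
  rw [neg_pow, pow_mul]
  ring

/-- The substitution `u = arctan x` in `∫ log tan u`. -/
lemma integral_log_sin_sub_log_cos :
    (∫ u in 0..(π / 4), log (sin u)) - ∫ u in 0..(π / 4), log (cos u) = -catalanG := by
  have hpi := pi_pos
  have hgint : IntervalIntegrable (fun u => log (sin u) - log (cos u)) MeasureTheory.volume
      0 (π / 4) := intervalIntegrable_log_sin.sub intervalIntegrable_log_cos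
  have himg : ∀ x ∈ Set.Icc (0 : ℝ) 1, arctan x ∈ Set.Icc 0 (π / 4) := by
    intro x hx
    rw [← arctan_one, ← arctan_zero]
    exact ⟨arctan_strictMono.monotone hx.1, arctan_strictMono.monotone hx.2⟩
  have hpt : ∀ x : ℝ, 0 < x → log (sin (arctan x)) - log (cos (arctan x)) = log x := by
    intro x hx
    have hc := cos_arctan_pos x
    have ht := tan_arctan x
    rw [tan_eq_sin_div_cos] at ht
    have hs : sin (arctan x) ≠ 0 := by
      intro h
      rw [h, zero_div] at ht
      exact hx.ne ht
    rw [← log_div hs hc.ne', ht]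
  have hae : ∀ x ∈ Set.Ioc (0 : ℝ) 1, log x * (1 / (1 + x ^ 2)) =
      ((fun u => log (sin u) - log (cos u)) ∘ arctan) x * (1 / (1 + x ^ 2)) := by
    intro x hx
    simp only [Function.comp, hpt x hx.1]
  have hlog : IntervalIntegrable (fun x : ℝ => log x * (1 / (1 + x ^ 2))) MeasureTheory.volume
      0 1 := by
    refine intervalIntegral.intervalIntegrable_log'.mul_continuousOn ?_
    refine Continuous.continuousOn (continuous_const.div (by fun_prop) fun x => by positivity)
  have hcv := intervalIntegral.integral_comp_mul_deriv''' (a := 0) (b := 1) (f := arctan)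
    (f' := fun x => 1 / (1 + x ^ 2)) (g := fun u => log (sin u) - log (cos u))
    continuous_arctan.continuousOn (fun x _ => (hasDerivAt_arctan x).hasDerivWithinAt)
    (by
      rintro _ ⟨x, hx, rfl⟩
      simp only [zero_le_one, min_eq_left, max_eq_right] at hx
      have hs : sin (arctan x) ≠ 0 := by
        rw [sin_arctan]
        have := hx.1
        positivity
      have hc := (cos_arctan_pos x).ne'
      exact ((continuous_sin.continuousAt.log hs).sub (continuous_cos.continuousAt.log hc)).continuousWithinAt)
    (by
      refine MeasureTheory.IntegrableOn.mono_set
        ((intervalIntegrable_iff_integrableOn_Icc_of_le (by positivity)).1 hgint) ?_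
      rintro _ ⟨x, hx, rfl⟩
      rw [Set.uIcc_of_le zero_le_one] at hx
      exact himg x hx)
    (by
      rw [Set.uIcc_of_le zero_le_one, integrableOn_Icc_iff_integrableOn_Ioc]
      exact MeasureTheory.IntegrableOn.congr_fun hlog.1 hae measurableSet_Ioc)
  rw [arctan_zero, arctan_one] at hcv
  rw [← integral_log_div_one_add_sq]
  refine (intervalIntegral.integral_sub intervalIntegrable_log_sin
    intervalIntegrable_log_cos).symm.trans (hcv.symm.trans ?_)
  rw [intervalIntegral.integral_of_le zero_le_one, intervalIntegral.integral_of_le zero_le_one]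
  exact (MeasureTheory.setIntegral_congr_fun measurableSet_Ioc hae).symm

theorem log4_sub_hypergeom_eq_catalan :
    Real.log 4 - (1/8) * F43 1 = 4 * catalanG / π := by
  have hpi := pi_pos
  have hF : F43 1 = 4 * ∑' n : ℕ, (wallis (n + 1) / ((n : ℝ) + 1) * wallis (n + 1)) := by
    rw [F43, ← tsum_mul_left]
    exact tsum_congr F43_term
  have hS : π / 2 * ∑' n : ℕ, (wallis (n + 1) / ((n : ℝ) + 1) * wallis (n + 1)) =
      -8 * ∫ u in 0..(π / 4), log (cos u) := by
    rw [← integral_log_cos_half, ← hasSum_wallis_sq.tsum_eq, ← tsum_mul_left]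
    exact tsum_congr fun n => by ring
  have hadd := integral_log_cos_add_log_sin
  have hsub := integral_log_sin_sub_log_cos
  have hlog4 : log 4 = 2 * log 2 := by
    rw [show (4 : ℝ) = 2 ^ 2 by norm_num, log_pow]
    norm_num
  rw [hF, hlog4, eq_div_iff hpi.ne']
  linear_combination (-1) * hS + 4 * hadd - 4 * hsub
end

section
/- The spanning tree constant of the triangular lattice, given by the double integral (1/(4π²)) ∫_{-π}^{π} ∫_{-π}^{π} log(6 − 2(cos k₁ + cos k₂ + cos(k₁+k₂))) dk₁ dk₂, equals (15√3/(4π))·L_{−3}(2), where L_{−3}(2) = ∑_{n=1}^∞ χ(n)/n² and χ is the nontrivial Dirichlet character modulo 3 (χ(n) = 1 if n ≡ 1 mod 3, χ(n) = −1 if n ≡ 2 mod 3, χ(n) = 0 if 3 | n). -/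
/-!
Write `s = sin (k₁/2)`. By Jensen's formula for a linear factor, the inner integral equals
`2π log P(|s|)` with `P(s) = 2 + 2s² + 2s√(3+s²)` (`inner_integral`), so the claim becomes
`∫₀^{π/2} log P(sin u) du = (15√3/8) L₋₃(2)`.

The remaining integral is evaluated by deforming the edge weights of the lattice: for conductances
`(1, t, t)` the analogue of `P` is `2t + 2s² + 2s√(s²+2t+t²)`, which is `4s²` at `t = 0` and `P(s)`
at `t = 1`. With `t = 1/cos ψ - 1`, `0 ≤ ψ ≤ π/3`, the `ψ`-derivative of its logarithm is
`K(ψ) M(ψ, u)` with `K = sin ψ / (cos ψ (1 - cos ψ))` and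
`M = 1 - sin u cos ψ / √(1 - cos² u cos² ψ)`. Since `∫₀^{π/2} M(ψ, u) du = ψ` (`integral_kerM`) and
`∫₀^{π/2} log (4 sin² u) du = 0`, Fubini's theorem gives
`∫₀^{π/2} log P(sin u) du = ∫₀^{π/3} ψ K(ψ) dψ` (`integral_log_innerP`).

As `K(ψ) = cot (ψ/2) + tan ψ`, integration by parts turns this into `(5/2) Cl₂(π/3)`, where
`Cl₂(x) = -∫₀ˣ log (2 sin (t/2)) dt` (`integral_mul_kerK`). Finally `Cl₂(x) = ∑ sin(nx)/n²`, by Abel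
summation of the Taylor series of the logarithm (`clausen`), and `Cl₂(π/3) = (3√3/4) L₋₃(2)` by
splitting the series into even and odd `n` (`clausen_pi_div_three`).
-/

open Real

/-- The nontrivial Dirichlet character modulo 3, as a function on `ℕ`. -/
noncomputable def chi3 (n : ℕ) : ℝ :=
  if n % 3 = 1 then 1 else if n % 3 = 2 then -1 else 0

/-- The Dirichlet L-series `L_{−3}(2) = ∑_{n=1}^∞ χ(n)/n²`. -/
noncomputable def Lm3 : ℝ := ∑' n : ℕ, chi3 n / (n : ℝ) ^ 2

open MeasureTheory Set Filter Topology

/-! ### The inner integral -/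

/-- `exp` of the average over `k₂` of the logarithm in the theorem, as a function of
`s = |sin (k₁/2)|`. -/
noncomputable def innerP (s : ℝ) : ℝ := 2 + 2 * s ^ 2 + 2 * s * √(3 + s ^ 2)

lemma innerP_ge (s : ℝ) (hs : 0 ≤ s) : 2 ≤ innerP s := by
  unfold innerP; have := Real.sqrt_nonneg (3 + s ^ 2); nlinarith [mul_nonneg hs this, sq_nonneg s]

lemma continuous_innerP : Continuous innerP := by
  unfold innerP; fun_prop

/-- The inner integral. The value `k = 0` is excluded because the integrand is singular there; it is
a null set for the outer integral. -/
lemma inner_integral (k : ℝ) (hk : k ∈ Ioc (-π) π) (hk0 : k ≠ 0) :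
    ∫ k₂ in (-π)..π, Real.log (6 - 2 * (Real.cos k + Real.cos k₂ + Real.cos (k + k₂))) =
      2 * π * Real.log (innerP |Real.sin (k / 2)|) := by
  set s := |Real.sin (k / 2)| with hs
  set c := Real.cos (k / 2) with hc
  have hs0 : 0 < s := by
    rw [hs, abs_pos]
    rcases lt_or_gt_of_ne hk0 with h | h
    · exact (Real.sin_neg_of_neg_of_neg_pi_lt (by linarith) (by linarith [hk.1, Real.pi_pos])).ne
    · exact (Real.sin_pos_of_pos_of_lt_pi (by linarith) (by linarith [hk.2, Real.pi_pos])).ne'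
  have hsc : c ^ 2 = 1 - s ^ 2 := by
    rw [hs, sq_abs, hc]; linarith [Real.sin_sq_add_cos_sq (k / 2)]
  set p := innerP s with hp
  have hp2 : 2 ≤ p := innerP_ge s hs0.le
  have hp0 : p ≠ 0 := by linarith
  have hck : Real.cos k = 1 - 2 * s ^ 2 := by
    have := Real.cos_two_mul (k / 2)
    rw [show 2 * (k / 2) = k by ring] at this
    rw [this, ← hc, hsc]; ring
  have hquad : p ^ 2 + 4 * c ^ 2 = (4 + 4 * s ^ 2) * p := by
    have h := Real.sq_sqrt (show (0 : ℝ) ≤ 3 + s ^ 2 by positivity)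
    rw [hp, hsc, innerP]
    linear_combination (4 * s ^ 2) * h
  set q := 2 * c / p with hq
  have hq1 : q ^ 2 < 1 := by
    rw [hq, div_pow, div_lt_one (by positivity), mul_pow, hsc]
    nlinarith [sq_pos_of_pos hs0]
  -- `q` is chosen so that `4 + 4s² - 4c cos t = p ‖e^{it} - q‖²`; as `|q| < 1`, the circle average
  -- of `log ‖e^{it} - q‖` vanishes.
  have hnorm : ∀ t : ℝ, ‖circleMap 0 1 t - (q : ℂ)‖ ^ 2 = 1 + q ^ 2 - 2 * q * Real.cos t := by
    intro t
    rw [← Complex.normSq_eq_norm_sq, Complex.normSq_apply]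
    simp only [circleMap, Complex.ofReal_one, one_mul, zero_add, Complex.sub_re, Complex.sub_im,
      Complex.exp_ofReal_mul_I_re, Complex.exp_ofReal_mul_I_im, Complex.ofReal_re,
      Complex.ofReal_im]
    linear_combination Real.sin_sq_add_cos_sq t
  have hfun : ∀ t : ℝ, Real.log (4 + 4 * s ^ 2 - 4 * c * Real.cos t) =
      Real.log p + 2 * Real.log ‖circleMap 0 1 t - (q : ℂ)‖ := by
    intro t
    have hpos : ‖circleMap 0 1 t - (q : ℂ)‖ ≠ 0 := by
      intro h0
      have h1 := hnorm t
      rw [h0] at h1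
      nlinarith [Real.sin_sq_add_cos_sq t, sq_nonneg (q - Real.cos t), sq_nonneg (Real.sin t)]
    have : 4 + 4 * s ^ 2 - 4 * c * Real.cos t = p * ‖circleMap 0 1 t - (q : ℂ)‖ ^ 2 := by
      rw [hnorm, hq]; field_simp; linear_combination -hquad
    rw [this, Real.log_mul hp0 (pow_ne_zero 2 hpos), Real.log_pow]; norm_num
  have hper : Function.Periodic (fun t : ℝ => Real.log (4 + 4 * s ^ 2 - 4 * c * Real.cos t))
      (2 * π) := by
    intro t; simp only [Real.cos_periodic t]
  have havg : ∫ t in (0:ℝ)..2 * π, Real.log ‖circleMap 0 1 t - (q : ℂ)‖ = 0 := by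
    have h := circleAverage_log_norm_sub_const₀ (a := (q : ℂ)) (by
      rw [Complex.norm_real, Real.norm_eq_abs]; exact (sq_lt_one_iff_abs_lt_one q).1 hq1)
    rw [Real.circleAverage_def, smul_eq_mul, mul_eq_zero] at h
    exact h.resolve_left (by positivity)
  calc ∫ k₂ in (-π)..π, Real.log (6 - 2 * (Real.cos k + Real.cos k₂ + Real.cos (k + k₂)))
      = ∫ k₂ in (-π)..π, Real.log (4 + 4 * s ^ 2 - 4 * c * Real.cos (k₂ + k / 2)) := by
        congr 1; ext x; congr 1
        have h1 : Real.cos x + Real.cos (k + x) = 2 * c * Real.cos (x + k / 2) := by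
          have e1 : x = (x + k / 2) - k / 2 := by ring
          have e2 : k + x = (x + k / 2) + k / 2 := by ring
          have : Real.cos x = Real.cos ((x + k / 2) - k / 2) := by rw [← e1]
          rw [this, e2, Real.cos_add, Real.cos_sub, hc]; ring
        linear_combination -2 * h1 - 2 * hck
    _ = ∫ t in (-π + k / 2)..(π + k / 2), Real.log (4 + 4 * s ^ 2 - 4 * c * Real.cos t) := by
        rw [intervalIntegral.integral_comp_add_right
          (fun t => Real.log (4 + 4 * s ^ 2 - 4 * c * Real.cos t))]
    _ = ∫ t in (0:ℝ)..2 * π, Real.log (4 + 4 * s ^ 2 - 4 * c * Real.cos t) := by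
        have := hper.intervalIntegral_add_eq (-π + k / 2) 0
        rw [show -π + k / 2 + 2 * π = π + k / 2 by ring, zero_add] at this
        exact this
    _ = ∫ t in (0:ℝ)..2 * π, (Real.log p + 2 * Real.log ‖circleMap 0 1 t - (q : ℂ)‖) := by
        simp only [hfun]
    _ = 2 * π * Real.log p := by
        rw [intervalIntegral.integral_add (by simp), intervalIntegral.integral_const_mul, havg]
        · simp
        · apply IntervalIntegrable.const_mul
          apply Continuous.intervalIntegrable
          apply Continuous.log (by fun_prop)
          intro t h0
          have h1 := hnorm t
          rw [h0] at h1
          nlinarith [Real.sin_sq_add_cos_sq t, sq_nonneg (q - Real.cos t), sq_nonneg (Real.sin t)]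

lemma outer_integral :
    ∫ k₁ in (-π)..π, (∫ k₂ in (-π)..π,
        Real.log (6 - 2 * (Real.cos k₁ + Real.cos k₂ + Real.cos (k₁ + k₂)))) =
      8 * π * ∫ u in (0:ℝ)..π / 2, Real.log (innerP (Real.sin u)) := by
  have hcont : Continuous fun u : ℝ => Real.log (innerP |Real.sin u|) := by
    apply Continuous.log (continuous_innerP.comp (by fun_prop))
    intro x; have := innerP_ge |Real.sin x| (abs_nonneg _); simp only [Function.comp]; linarith
  have h0 : ∀ᵐ k : ℝ, k ≠ 0 := (countable_singleton (0:ℝ)).ae_notMem volume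
  have e1 : ∫ k₁ in (-π)..π, (∫ k₂ in (-π)..π,
        Real.log (6 - 2 * (Real.cos k₁ + Real.cos k₂ + Real.cos (k₁ + k₂)))) =
      ∫ k in (-π)..π, 2 * π * Real.log (innerP |Real.sin (k / 2)|) := by
    apply intervalIntegral.integral_congr_ae
    filter_upwards [h0] with k hk hm
    rw [uIoc_of_le (by linarith [Real.pi_pos])] at hm
    exact inner_integral k hm hk
  have e2 : ∫ u in (-(π / 2))..0, Real.log (innerP |Real.sin u|) =
      ∫ u in (0:ℝ)..π / 2, Real.log (innerP |Real.sin u|) := by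
    have := intervalIntegral.integral_comp_neg (a := 0) (b := π / 2)
      (fun u : ℝ => Real.log (innerP |Real.sin u|))
    simpa using this.symm
  have e3 : ∫ u in (0:ℝ)..π / 2, Real.log (innerP |Real.sin u|) =
      ∫ u in (0:ℝ)..π / 2, Real.log (innerP (Real.sin u)) := by
    apply intervalIntegral.integral_congr
    intro u hu
    rw [uIcc_of_le (by positivity)] at hu
    simp only
    rw [abs_of_nonneg (Real.sin_nonneg_of_nonneg_of_le_pi hu.1 (by linarith [hu.2, Real.pi_pos]))]
  rw [e1, intervalIntegral.integral_const_mul,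
    intervalIntegral.integral_comp_div (fun u : ℝ => Real.log (innerP |Real.sin u|)) two_ne_zero,
    smul_eq_mul, neg_div,
    ← intervalIntegral.integral_add_adjacent_intervals (b := 0)
      (hcont.intervalIntegrable _ _) (hcont.intervalIntegrable _ _), e2, e3]
  ring

/-! ### The Clausen function -/

/-- The Clausen series damped by `rⁿ`, from termwise integration of
`-log |1 - r e^{it}| = ∑ rⁿ cos(nt)/n`. -/
lemma clausen_r (r x : ℝ) (hr0 : 0 ≤ r) (hr1 : r < 1) :
    ∑' n : ℕ, r ^ n * Real.sin (n * x) / (n : ℝ) ^ 2 =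
      -∫ t in (0:ℝ)..x, Real.log ‖1 - (r : ℂ) * Complex.exp (t * Complex.I)‖ := by
  have hterm : ∀ t : ℝ, HasSum (fun n : ℕ => r ^ n * Real.cos (n * t) / n)
      (-Real.log ‖1 - (r : ℂ) * Complex.exp (t * Complex.I)‖) := by
    intro t
    have h := Complex.hasSum_re (Complex.hasSum_taylorSeries_neg_log
      (z := (r : ℂ) * Complex.exp (t * Complex.I)) (by
        rw [norm_mul, Complex.norm_exp_ofReal_mul_I, Complex.norm_real, mul_one,
          Real.norm_of_nonneg hr0]; exact hr1))
    rw [Complex.neg_re, Complex.log_re] at h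
    convert h using 2 with n
    rw [mul_pow, ← Complex.exp_nat_mul, ← Complex.ofReal_pow, Complex.div_natCast_re, Complex.re_ofReal_mul,
      ← mul_assoc, ← Complex.ofReal_natCast, ← Complex.ofReal_mul,
      Complex.exp_ofReal_mul_I_re]
  have hInt : ∀ n : ℕ, ∫ t in (0:ℝ)..x, r ^ n * Real.cos (n * t) / n =
      r ^ n * Real.sin (n * x) / (n : ℝ) ^ 2 := by
    intro n
    rcases Nat.eq_zero_or_pos n with rfl | hn
    · simp
    have hn' : (n : ℝ) ≠ 0 := by positivity
    rw [intervalIntegral.integral_div, intervalIntegral.integral_const_mul,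
      intervalIntegral.integral_comp_mul_left _ hn', integral_cos]
    simp; field_simp
  have key := intervalIntegral.hasSum_integral_of_dominated_convergence
    (μ := volume) (a := 0) (b := x)
    (F := fun (n : ℕ) (t : ℝ) => r ^ n * Real.cos (n * t) / n)
    (f := fun t => -Real.log ‖1 - (r : ℂ) * Complex.exp (t * Complex.I)‖)
    (bound := fun n _ => r ^ n)
    (fun n => by apply Continuous.aestronglyMeasurable; fun_prop)
    (fun n => Eventually.of_forall fun t _ => by
      rw [norm_div, norm_mul, Real.norm_of_nonneg (pow_nonneg hr0 n), Real.norm_natCast,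
        Real.norm_eq_abs]
      rcases Nat.eq_zero_or_pos n with rfl | hn
      · simp
      have hn' : (1 : ℝ) ≤ n := by exact_mod_cast hn
      rw [div_le_iff₀ (by positivity)]
      exact mul_le_mul_of_nonneg_left ((Real.abs_cos_le_one _).trans hn') (pow_nonneg hr0 n))
    (Eventually.of_forall fun t _ => summable_geometric_of_lt_one hr0 hr1)
    (by simp)
    (Eventually.of_forall fun t _ => hterm t)
  simp only [hInt] at key
  rw [key.tsum_eq, intervalIntegral.integral_neg]

/-- The integral representation of the Clausen function `Cl₂` on `[0, π]`: the limit `r → 1` of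
`clausen_r`. -/
lemma clausen (x : ℝ) (hx0 : 0 ≤ x) (hx : x ≤ π) :
    ∑' n : ℕ, Real.sin (n * x) / (n : ℝ) ^ 2 =
      -∫ t in (0:ℝ)..x, Real.log (2 * Real.sin (t / 2)) := by
  have hne : (𝓝[<] (1:ℝ)).NeBot := inferInstance
  have hev : ∀ᶠ r : ℝ in 𝓝[<] 1, 0 < r ∧ r < 1 := by
    filter_upwards [Ioo_mem_nhdsLT (show (0:ℝ) < 1 by norm_num)] with r hr using hr
  have hL : Tendsto (fun r : ℝ => ∑' n : ℕ, r ^ n * Real.sin (n * x) / (n : ℝ) ^ 2) (𝓝[<] 1)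
      (𝓝 (∑' n : ℕ, Real.sin (n * x) / (n : ℝ) ^ 2)) := by
    apply tendsto_tsum_of_dominated_convergence
      (bound := fun n : ℕ => 1 / (n : ℝ) ^ 2) (Real.summable_one_div_nat_pow.2 one_lt_two)
    · intro n
      have : Continuous fun r : ℝ => r ^ n * Real.sin (n * x) / (n : ℝ) ^ 2 := by fun_prop
      have h := this.tendsto 1
      simp only [one_pow, one_mul] at h
      exact h.mono_left nhdsWithin_le_nhds
    · filter_upwards [hev] with r hr n
      rw [norm_div, norm_mul, norm_pow, norm_pow, Real.norm_natCast]
      gcongr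
      rw [Real.norm_of_nonneg hr.1.le, Real.norm_eq_abs]
      exact mul_le_one₀ (pow_le_one₀ hr.1.le hr.2.le) (abs_nonneg _) (Real.abs_sin_le_one _)
  have hnormsq : ∀ r t : ℝ, ‖1 - (r : ℂ) * Complex.exp (t * Complex.I)‖ ^ 2 =
      (r - Real.cos t) ^ 2 + Real.sin t ^ 2 := by
    intro r t
    rw [← Complex.normSq_eq_norm_sq, Complex.normSq_apply]
    simp only [Complex.sub_re, Complex.sub_im, Complex.re_ofReal_mul, Complex.im_ofReal_mul,
      Complex.exp_ofReal_mul_I_re, Complex.exp_ofReal_mul_I_im, Complex.one_re, Complex.one_im]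
    linear_combination (r ^ 2 - 1) * Real.sin_sq_add_cos_sq t
  have hae : ∀ᵐ t : ℝ, t ≠ π := (countable_singleton π).ae_notMem volume
  have hR : Tendsto
      (fun r : ℝ => ∫ t in (0:ℝ)..x, Real.log ‖1 - (r : ℂ) * Complex.exp (t * Complex.I)‖)
      (𝓝[<] 1) (𝓝 (∫ t in (0:ℝ)..x, Real.log (2 * Real.sin (t / 2)))) := by
    -- For `t ∈ (0, π)` one has `sin t ≤ |1 - r e^{it}| ≤ 2`, which provides the dominating function.
    apply intervalIntegral.tendsto_integral_filter_of_dominated_convergence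
      (fun t => |Real.log (Real.sin t)| + Real.log 2)
    · filter_upwards with r
      apply Measurable.aestronglyMeasurable
      fun_prop
    · filter_upwards [hev] with r hr
      filter_upwards [hae] with t ht hm
      rw [uIoc_of_le hx0] at hm
      have hs : 0 < Real.sin t :=
        Real.sin_pos_of_pos_of_lt_pi hm.1 (lt_of_le_of_ne (hm.2.trans hx) ht)
      have h1 : Real.sin t ≤ ‖1 - (r : ℂ) * Complex.exp (t * Complex.I)‖ := by
        apply le_of_sq_le_sq _ (norm_nonneg _)
        rw [hnormsq]; nlinarith [sq_nonneg (r - Real.cos t)]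
      have h2 : ‖1 - (r : ℂ) * Complex.exp (t * Complex.I)‖ ≤ 2 := by
        refine (norm_sub_le _ _).trans ?_
        rw [norm_mul, Complex.norm_exp_ofReal_mul_I, Complex.norm_real,
          Real.norm_of_nonneg hr.1.le, norm_one]
        linarith [hr.2]
      have l1 := Real.log_le_log hs h1
      have l2 := Real.log_le_log (hs.trans_le h1) h2
      have l3 := Real.log_nonneg (show (1:ℝ) ≤ 2 by norm_num)
      rw [Real.norm_eq_abs, abs_le]
      constructor
      · linarith [neg_abs_le (Real.log (Real.sin t))]
      · linarith [abs_nonneg (Real.log (Real.sin t))]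
    · exact (intervalIntegrable_log_sin (a := 0) (b := x)).norm.add (by simp)
    · filter_upwards with t hm
      rw [uIoc_of_le hx0] at hm
      have hs : 0 < Real.sin (t / 2) :=
        Real.sin_pos_of_pos_of_lt_pi (by linarith [hm.1]) (by linarith [hm.1, hm.2])
      have hval : ‖1 - ((1:ℝ) : ℂ) * Complex.exp (t * Complex.I)‖ = 2 * Real.sin (t / 2) := by
        rw [← sq_eq_sq₀ (norm_nonneg _) (by positivity), hnormsq]
        have h1 := Real.cos_two_mul (t / 2)
        rw [show 2 * (t / 2) = t by ring] at h1
        linear_combination Real.sin_sq_add_cos_sq t - 2 * h1 - 4 * Real.sin_sq_add_cos_sq (t / 2)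
      have hc : ContinuousAt
          (fun r : ℝ => Real.log ‖1 - (r : ℂ) * Complex.exp (t * Complex.I)‖) 1 := by
        apply ContinuousAt.log (by fun_prop)
        rw [hval]; positivity
      have := hc.tendsto
      rw [hval] at this
      exact this.mono_left nhdsWithin_le_nhds
  refine tendsto_nhds_unique hL (hR.neg.congr' ?_)
  filter_upwards [hev] with r hr
  exact (clausen_r r x hr.1.le hr.2).symm

lemma summable_chi3 : Summable fun n : ℕ => chi3 n / (n : ℝ) ^ 2 := by
  apply Summable.of_norm_bounded (Real.summable_one_div_nat_pow.2 one_lt_two)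
  intro n
  rw [norm_div, norm_pow, Real.norm_natCast]
  gcongr
  unfold chi3; split_ifs <;> simp

/-- Up to the factor `√3/2`, the numbers `sin (nπ/3)` are `χ₃(n)` twisted by the sign `(-1)^(n+1)`. -/
lemma sin_mul_pi_div_three (n : ℕ) : Real.sin (n * (π / 3)) =
    √3 / 2 * (if n % 2 = 0 then -chi3 n else chi3 n) := by
  have hs : ∀ j m : ℕ, Real.sin (((6 * m + j : ℕ) : ℝ) * (π / 3)) = Real.sin (j * (π / 3)) := by
    intro j m
    rw [← Real.sin_add_nat_mul_two_pi (j * (π / 3)) m]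
    congr 1; push_cast; ring
  have h1 : Real.sin (π / 3) = √3 / 2 := Real.sin_pi_div_three
  have h6 : n % 6 < 6 := Nat.mod_lt _ (by norm_num)
  have hd : n = 6 * (n / 6) + n % 6 := (Nat.div_add_mod n 6).symm
  have hv : Real.sin (n * (π / 3)) = Real.sin ((n % 6 : ℕ) * (π / 3)) := by
    conv_lhs => rw [hd]
    exact hs _ _
  rw [hv]
  have e2 : Real.sin (2 * (π / 3)) = √3 / 2 := by
    rw [show 2 * (π / 3) = π - π / 3 by ring, Real.sin_pi_sub, h1]
  have e3 : Real.sin (3 * (π / 3)) = 0 := by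
    rw [show 3 * (π / 3) = π by ring, Real.sin_pi]
  have e4 : Real.sin (4 * (π / 3)) = -(√3 / 2) := by
    rw [show 4 * (π / 3) = π / 3 + π by ring, Real.sin_add_pi, h1]
  have e5 : Real.sin (5 * (π / 3)) = -(√3 / 2) := by
    rw [show 5 * (π / 3) = 2 * π - π / 3 by ring, Real.sin_two_pi_sub, h1]
  generalize hj : n % 6 = j at *
  have hn2 : n % 2 = j % 2 := by omega
  have hn3 : n % 3 = j % 3 := by omega
  unfold chi3
  rw [hn2, hn3]
  interval_cases j <;> norm_num [h1, e2, e3, e4, e5]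

lemma clausen_pi_div_three :
    ∑' n : ℕ, Real.sin (n * (π / 3)) / (n : ℝ) ^ 2 = 3 * √3 / 4 * Lm3 := by
  set f : ℕ → ℝ := fun n => chi3 n / (n : ℝ) ^ 2 with hf
  have hfs : Summable f := summable_chi3
  have hfe : ∀ m : ℕ, f (2 * m) = -(1 / 4) * f m := by
    intro m
    have hchi : chi3 (2 * m) = -chi3 m := by
      unfold chi3
      have : m % 3 < 3 := Nat.mod_lt _ (by norm_num)
      have h2 : (2 * m) % 3 = (2 * (m % 3)) % 3 := by omega
      rw [h2]
      interval_cases m % 3 <;> norm_num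
    simp only [hf, hchi]; push_cast
    rw [mul_pow]
    rw [show (2:ℝ) ^ 2 = 4 by norm_num, neg_div, div_mul_eq_div_div_swap]; ring
  have hse : Summable fun m : ℕ => f (2 * m) := by
    simp only [hfe]; exact hfs.mul_left _
  have hso : Summable fun m : ℕ => f (2 * m + 1) :=
    hfs.comp_injective (i := fun m : ℕ => 2 * m + 1) (fun a b h => by simpa using h)
  have hL : Lm3 = ∑' n, f n := rfl
  have hE : ∑' m : ℕ, f (2 * m) = -(1 / 4) * Lm3 := by
    simp only [hfe]; rw [tsum_mul_left, hL]
  have hO : ∑' m : ℕ, f (2 * m) + ∑' m : ℕ, f (2 * m + 1) = Lm3 :=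
    tsum_even_add_odd hse hso
  set g : ℕ → ℝ := fun n => Real.sin (n * (π / 3)) / (n : ℝ) ^ 2 with hg
  have hge : ∀ m, g (2 * m) = -(√3 / 2) * f (2 * m) := by
    intro m
    simp only [hg, sin_mul_pi_div_three, hf]
    rw [if_pos (by omega)]; ring
  have hgo : ∀ m, g (2 * m + 1) = √3 / 2 * f (2 * m + 1) := by
    intro m
    simp only [hg, sin_mul_pi_div_three, hf]
    rw [if_neg (by omega)]; ring
  have := tsum_even_add_odd (f := g) (by simp only [hge]; exact hse.mul_left _)
    (by simp only [hgo]; exact hso.mul_left _)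
  rw [← this]
  simp only [hge, hgo]
  rw [tsum_mul_left, tsum_mul_left, hE]
  rw [hE] at hO
  linear_combination (√3 / 2) * hO

/-! ### Deformation of the weights -/

/-- The logarithmic derivative of the weight `t(ψ) = 1 / cos ψ - 1`; equivalently
`cot (ψ/2) + tan ψ`. -/
noncomputable def kerK (ψ : ℝ) : ℝ := Real.sin ψ / (Real.cos ψ * (1 - Real.cos ψ))

/-- The factor `1 - s / √(s² + 2t + t²)` with `s = sin u` and `t = 1 / cos ψ - 1`, cleared of the
denominator `cos ψ`. -/
noncomputable def kerM (ψ u : ℝ) : ℝ :=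
  1 - Real.sin u * Real.cos ψ / √(1 - Real.cos u ^ 2 * Real.cos ψ ^ 2)

lemma trig_psi {ψ : ℝ} (h : ψ ∈ Ioc 0 (π / 3)) :
    0 < Real.sin ψ ∧ 0 < Real.cos ψ ∧ Real.cos ψ < 1 := by
  have hp := Real.pi_pos
  have h1 : 0 < Real.sin ψ := Real.sin_pos_of_pos_of_lt_pi h.1 (by linarith [h.2])
  have h2 : 0 < Real.cos ψ := Real.cos_pos_of_mem_Ioo ⟨by linarith [h.1], by linarith [h.2]⟩
  refine ⟨h1, h2, ?_⟩
  nlinarith [Real.sin_sq_add_cos_sq ψ]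

lemma kerK_nonneg {ψ : ℝ} (h : ψ ∈ Ioc 0 (π / 3)) : 0 ≤ kerK ψ := by
  obtain ⟨h1, h2, h3⟩ := trig_psi h
  have : 0 < 1 - Real.cos ψ := by linarith
  unfold kerK; positivity

lemma radicand_pos {ψ : ℝ} (h : ψ ∈ Ioc 0 (π / 3)) (u : ℝ) :
    0 < 1 - Real.cos u ^ 2 * Real.cos ψ ^ 2 := by
  obtain ⟨h1, h2, h3⟩ := trig_psi h
  have : Real.cos ψ ^ 2 < 1 := by nlinarith
  nlinarith [Real.sin_sq_add_cos_sq u, sq_nonneg (Real.sin u), sq_nonneg (Real.cos u),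
    sq_nonneg (Real.cos ψ)]

lemma kerM_nonneg {ψ : ℝ} (h : ψ ∈ Ioc 0 (π / 3)) (u : ℝ) : 0 ≤ kerM ψ u := by
  have hr := radicand_pos h u
  unfold kerM
  rw [sub_nonneg, div_le_one (Real.sqrt_pos.2 hr)]
  apply Real.le_sqrt_of_sq_le
  have := Real.cos_sq_le_one ψ
  nlinarith [Real.sin_sq_add_cos_sq u]

lemma continuous_kerM {ψ : ℝ} (h : ψ ∈ Ioc 0 (π / 3)) : Continuous (kerM ψ) := by
  unfold kerM
  refine continuous_const.sub (Continuous.div (by fun_prop) (by fun_prop) fun u => ?_)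
  exact (Real.sqrt_pos.2 (radicand_pos h u)).ne'

/-- An antiderivative of `kerM ψ` is `u + arcsin (cos u cos ψ)`. -/
lemma integral_kerM {ψ : ℝ} (h : ψ ∈ Ioc 0 (π / 3)) :
    ∫ u in (0:ℝ)..π / 2, kerM ψ u = ψ := by
  have hd : ∀ u : ℝ, HasDerivAt
      (fun u => u + Real.arcsin (Real.cos u * Real.cos ψ)) (kerM ψ u) u := by
    intro u
    have hr := radicand_pos h u
    have hlt : (Real.cos u * Real.cos ψ) ^ 2 < 1 := by rw [mul_pow]; linarith
    have habs := abs_lt.1 ((sq_lt_one_iff_abs_lt_one _).1 hlt)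
    have h1 := (Real.hasDerivAt_arcsin habs.1.ne' habs.2.ne).comp u
      ((Real.hasDerivAt_cos u).mul_const (Real.cos ψ))
    have h2 := (hasDerivAt_id u).add h1
    refine h2.congr_deriv ?_
    unfold kerM
    rw [mul_pow]; ring
  rw [intervalIntegral.integral_eq_sub_of_hasDerivAt (fun u _ => hd u)
    ((continuous_kerM h).intervalIntegrable _ _)]
  have hp := Real.pi_pos
  rw [Real.cos_pi_div_two, Real.cos_zero, zero_mul, one_mul, Real.arcsin_zero,
    ← Real.sin_pi_div_two_sub, Real.arcsin_sin (by linarith [h.1, h.2]) (by linarith [h.1])]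
  ring

/-- The logarithm of `2t + 2s² + 2s√(s² + 2t + t²)` with `t = 1 / cos ψ - 1`. It interpolates
between `log (4 s²)` at `ψ = 0` and `log (innerP s)` at `ψ = π / 3`. -/
noncomputable def potG (s ψ : ℝ) : ℝ :=
  Real.log (2 * (1 - Real.cos ψ) + 2 * s ^ 2 * Real.cos ψ
    + 2 * s * √(1 - (1 - s ^ 2) * Real.cos ψ ^ 2)) - Real.log (Real.cos ψ)

lemma potG_arg_pos {s : ℝ} (hs0 : 0 < s) (ψ : ℝ) (hc0 : 0 ≤ Real.cos ψ) :
    0 < 2 * (1 - Real.cos ψ) + 2 * s ^ 2 * Real.cos ψ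
    + 2 * s * √(1 - (1 - s ^ 2) * Real.cos ψ ^ 2) := by
  have h1 := Real.cos_le_one ψ
  have h3 : 0 < 1 - (1 - s ^ 2) * Real.cos ψ ^ 2 := by
    rcases hc0.eq_or_lt with h | h
    · rw [← h]; norm_num
    · nlinarith [mul_pos (sq_pos_of_pos hs0) (sq_pos_of_pos h)]
  have h2 := Real.sqrt_pos.2 h3
  have : 0 ≤ 1 - Real.cos ψ := by linarith
  positivity

lemma potG_hasDerivAt {s ψ : ℝ} (hs0 : 0 < s) (h : ψ ∈ Ioc 0 (π / 3)) :
    HasDerivAt (potG s)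
      (kerK ψ * (1 - s * Real.cos ψ / √(1 - (1 - s ^ 2) * Real.cos ψ ^ 2))) ψ := by
  obtain ⟨h1, h2, h3⟩ := trig_psi h
  have hr : 0 < 1 - (1 - s ^ 2) * Real.cos ψ ^ 2 := by
    nlinarith [mul_pos (sq_pos_of_pos hs0) (sq_pos_of_pos h2)]
  have hN := potG_arg_pos hs0 ψ h2.le
  have dc := Real.hasDerivAt_cos ψ
  have dD := (((dc.pow 2).const_mul (1 - s ^ 2)).const_sub 1).sqrt hr.ne'
  have dN := (((dc.const_sub 1).const_mul 2).add (dc.const_mul (2 * s ^ 2))).add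
    (dD.const_mul (2 * s))
  have dG := (dN.log hN.ne').sub (dc.log h2.ne')
  refine dG.congr_deriv ?_
  simp only [Pi.add_apply, Pi.pow_apply]
  have hDpos := Real.sqrt_pos.2 hr
  have hDsq := Real.sq_sqrt hr.le
  unfold kerK
  set D := √(1 - (1 - s ^ 2) * Real.cos ψ ^ 2) with hD
  set C := Real.cos ψ
  set S := Real.sin ψ
  have h1C : 1 - C ≠ 0 := by linarith
  have hN' : (2 * (1 - C) + 2 * s ^ 2 * C + 2 * s * D) ≠ 0 := hN.ne'
  have hC := h2.ne'
  have hD0 := hDpos.ne'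
  have key : 2 * (1 - s ^ 2) * (D + s * C) * C * (1 - C)
      + D * (2 * (1 - C) + 2 * s ^ 2 * C + 2 * s * D) * (1 - C)
      = (D - s * C) * (2 * (1 - C) + 2 * s ^ 2 * C + 2 * s * D) := by
    linear_combination (-2 * C * s) * hDsq
  set N := 2 * (1 - C) + 2 * s ^ 2 * C + 2 * s * D with hNdef
  have e1 : S / (C * (1 - C)) * (1 - s * C / D) =
      S * ((D - s * C) * N) / (C * (1 - C) * D * N) := by field_simp
  rw [e1, ← key]
  field_simp
  ring

/-- The fundamental theorem of calculus for `potG s` on `[0, π/3]`. Integrability near `ψ = 0`, where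
`kerK` blows up, follows from the nonnegativity of the derivative. -/
lemma potG_integral {s : ℝ} (hs0 : 0 < s) :
    IntervalIntegrable (fun ψ => kerK ψ * (1 - s * Real.cos ψ / √(1 - (1 - s ^ 2) * Real.cos ψ ^ 2)))
      volume 0 (π / 3) ∧
    ∫ ψ in (0:ℝ)..π / 3, kerK ψ * (1 - s * Real.cos ψ / √(1 - (1 - s ^ 2) * Real.cos ψ ^ 2)) =
      Real.log (innerP s) - Real.log (4 * s ^ 2) := by
  have hp := Real.pi_pos
  have hc0 : ∀ ψ ∈ Icc 0 (π / 3), 0 < Real.cos ψ := fun ψ hψ =>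
    Real.cos_pos_of_mem_Ioo ⟨by linarith [hψ.1], by linarith [hψ.2]⟩
  have hcont : ContinuousOn (potG s) (Icc 0 (π / 3)) := by
    unfold potG
    apply ContinuousOn.sub
    · exact ContinuousOn.log (by fun_prop) fun ψ hψ => (potG_arg_pos hs0 ψ (hc0 ψ hψ).le).ne'
    · exact ContinuousOn.log (by fun_prop) fun ψ hψ => (hc0 ψ hψ).ne'
  have hderiv : ∀ ψ ∈ Ioo 0 (π / 3), HasDerivAt (potG s)
      (kerK ψ * (1 - s * Real.cos ψ / √(1 - (1 - s ^ 2) * Real.cos ψ ^ 2))) ψ :=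
    fun ψ hψ => potG_hasDerivAt hs0 ⟨hψ.1, hψ.2.le⟩
  have hInt : IntervalIntegrable
      (fun ψ => kerK ψ * (1 - s * Real.cos ψ / √(1 - (1 - s ^ 2) * Real.cos ψ ^ 2)))
      volume 0 (π / 3) := by
    rw [intervalIntegrable_iff_integrableOn_Ioc_of_le (by positivity)]
    apply intervalIntegral.integrableOn_deriv_of_nonneg hcont hderiv
    intro ψ hψ
    have hψ' : ψ ∈ Ioc 0 (π / 3) := ⟨hψ.1, hψ.2.le⟩
    obtain ⟨h1, h2, h3⟩ := trig_psi hψ'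
    have hr : 0 < 1 - (1 - s ^ 2) * Real.cos ψ ^ 2 := by
      nlinarith [mul_pos (sq_pos_of_pos hs0) (sq_pos_of_pos h2)]
    apply mul_nonneg (kerK_nonneg hψ')
    rw [sub_nonneg, div_le_one (Real.sqrt_pos.2 hr)]
    apply Real.le_sqrt_of_sq_le
    nlinarith
  refine ⟨hInt, ?_⟩
  rw [intervalIntegral.integral_eq_sub_of_hasDerivAt_of_le (by positivity) hcont hderiv hInt]
  have e0 : potG s 0 = Real.log (4 * s ^ 2) := by
    unfold potG
    rw [Real.cos_zero, Real.log_one, show 1 - (1 - s ^ 2) * (1:ℝ) ^ 2 = s ^ 2 by ring,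
      Real.sqrt_sq hs0.le]
    rw [sub_zero]; congr 1; ring
  have e1 : potG s (π / 3) = Real.log (innerP s) := by
    have harg := potG_arg_pos hs0 (π / 3) (by rw [Real.cos_pi_div_three]; norm_num)
    unfold potG innerP
    rw [← Real.log_div harg.ne' (by rw [Real.cos_pi_div_three]; norm_num)]
    congr 1
    rw [Real.cos_pi_div_three, show 1 - (1 - s ^ 2) * (1 / 2 : ℝ) ^ 2 = (3 + s ^ 2) / 2 ^ 2 by ring,
      Real.sqrt_div (by positivity), Real.sqrt_sq (by norm_num)]
    ring
  rw [e0, e1]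

lemma kerM_eq (ψ u : ℝ) : kerM ψ u =
    1 - Real.sin u * Real.cos ψ / √(1 - (1 - Real.sin u ^ 2) * Real.cos ψ ^ 2) := by
  rw [kerM, Real.cos_sq']

/-- A form of `ψ K(ψ) = ψ (cot (ψ/2) + tan ψ)` that extends continuously to `ψ = 0`. -/
lemma mul_kerK_eq {ψ : ℝ} (h : ψ ∈ Ioc 0 (π / 3)) :
    ψ * kerK ψ = 2 * Real.cos (ψ / 2) / Real.sinc (ψ / 2) + ψ * (Real.sin ψ / Real.cos ψ) := by
  obtain ⟨h1, h2, h3⟩ := trig_psi h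
  have hψ := h.1
  have hp := Real.pi_pos
  have hsh : 0 < Real.sin (ψ / 2) :=
    Real.sin_pos_of_pos_of_lt_pi (by linarith) (by linarith [h.2])
  have e1 : Real.sin ψ = 2 * Real.sin (ψ / 2) * Real.cos (ψ / 2) := by
    rw [← Real.sin_two_mul]; congr 1; ring
  have e2 : Real.cos ψ = 1 - 2 * Real.sin (ψ / 2) ^ 2 := by
    rw [← Real.cos_two_mul_eq_one_sub]; congr 1; ring
  rw [kerK, Real.sinc_of_ne_zero (by positivity)]
  have e3 : Real.sin ψ / (Real.cos ψ * (1 - Real.cos ψ)) =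
      Real.cos (ψ / 2) / Real.sin (ψ / 2) + Real.sin ψ / Real.cos ψ := by
    have hne : 1 - Real.cos ψ ≠ 0 := by linarith
    have hcot : Real.sin ψ / (1 - Real.cos ψ) = Real.cos (ψ / 2) / Real.sin (ψ / 2) := by
      rw [e1, e2]; field_simp; ring
    rw [← hcot]; field_simp; ring
  rw [e3]; field_simp

lemma sinc_half_pos {ψ : ℝ} (h : ψ ∈ Icc 0 (π / 3)) : 0 < Real.sinc (ψ / 2) := by
  have hp := Real.pi_pos
  rcases h.1.eq_or_lt with h0 | h0
  · rw [← h0]; simp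
  · rw [Real.sinc_of_ne_zero (by positivity)]
    have : 0 < Real.sin (ψ / 2) := Real.sin_pos_of_pos_of_lt_pi (by linarith) (by linarith [h.2])
    positivity

lemma intervalIntegrable_mul_kerK :
    IntervalIntegrable (fun ψ => ψ * kerK ψ) volume 0 (π / 3) := by
  have hp := Real.pi_pos
  have h0 : (0:ℝ) ≤ π / 3 := by positivity
  have : ContinuousOn (fun ψ => 2 * Real.cos (ψ / 2) / Real.sinc (ψ / 2)
      + ψ * (Real.sin ψ / Real.cos ψ)) (Icc 0 (π / 3)) := by
    apply ContinuousOn.add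
    · exact ContinuousOn.div (by fun_prop)
        (Real.continuous_sinc.comp (by fun_prop)).continuousOn fun ψ hψ => (sinc_half_pos hψ).ne'
    · exact continuousOn_id.mul (ContinuousOn.div (by fun_prop) (by fun_prop) fun ψ hψ =>
        (Real.cos_pos_of_mem_Ioo ⟨by linarith [hψ.1], by linarith [hψ.2]⟩).ne')
  refine (this.intervalIntegrable_of_Icc h0).congr ?_
  intro ψ hψ
  rw [uIoc_of_le h0] at hψ
  exact (mul_kerK_eq hψ).symm

/-- Fubini's theorem for `kerK ψ * kerM ψ u`. The integrand is unbounded at the origin; it is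
integrable because it is nonnegative and its `u`-integral is `ψ * kerK ψ`. -/
lemma integral_swap :
    ∫ u in (0:ℝ)..π / 2, (Real.log (innerP (Real.sin u)) - Real.log (4 * Real.sin u ^ 2)) =
      ∫ ψ in (0:ℝ)..π / 3, ψ * kerK ψ := by
  have hp := Real.pi_pos
  have h3 : (0:ℝ) ≤ π / 3 := by positivity
  have h2 : (0:ℝ) ≤ π / 2 := by positivity
  have hu : ∀ u ∈ Ioc 0 (π / 2), ∫ ψ in (0:ℝ)..π / 3, kerK ψ * kerM ψ u =
      Real.log (innerP (Real.sin u)) - Real.log (4 * Real.sin u ^ 2) := by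
    intro u hu
    have hs : 0 < Real.sin u := Real.sin_pos_of_pos_of_lt_pi hu.1 (by linarith [hu.2])
    rw [← (potG_integral hs).2]
    simp only [kerM_eq]
  have hψ : ∀ ψ ∈ Ioc 0 (π / 3), ∫ u in (0:ℝ)..π / 2, kerK ψ * kerM ψ u = ψ * kerK ψ := by
    intro ψ h
    rw [intervalIntegral.integral_const_mul, integral_kerM h, mul_comm]
  have hmeas : Measurable (Function.uncurry fun ψ u => kerK ψ * kerM ψ u) := by
    unfold Function.uncurry kerK kerM; fun_prop
  have hInt : Integrable (Function.uncurry fun ψ u => kerK ψ * kerM ψ u)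
      ((volume.restrict (Ioc 0 (π / 3))).prod (volume.restrict (Ioc 0 (π / 2)))) := by
    rw [integrable_prod_iff hmeas.aestronglyMeasurable]
    constructor
    · filter_upwards [ae_restrict_mem measurableSet_Ioc] with ψ h
      have hc : Continuous fun u => kerK ψ * kerM ψ u := continuous_const.mul (continuous_kerM h)
      exact (hc.integrableOn_Icc (a := 0) (b := π / 2) (μ := volume)).mono_set Ioc_subset_Icc_self
    · have hI := intervalIntegrable_mul_kerK
      rw [intervalIntegrable_iff_integrableOn_Ioc_of_le h3] at hI
      refine hI.congr ?_
      filter_upwards [ae_restrict_mem measurableSet_Ioc] with ψ h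
      rw [← hψ ψ h, intervalIntegral.integral_of_le h2]
      apply integral_congr_ae
      filter_upwards with u
      exact (Real.norm_of_nonneg (mul_nonneg (kerK_nonneg h) (kerM_nonneg h u))).symm
  have hswap := integral_integral_swap hInt
  rw [intervalIntegral.integral_of_le h2, intervalIntegral.integral_of_le h3]
  calc ∫ u in Ioc 0 (π / 2), (Real.log (innerP (Real.sin u)) - Real.log (4 * Real.sin u ^ 2))
      = ∫ u in Ioc 0 (π / 2), ∫ ψ in Ioc 0 (π / 3), kerK ψ * kerM ψ u := by
        apply setIntegral_congr_fun measurableSet_Ioc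
        intro u h
        simp only
        rw [← hu u h, intervalIntegral.integral_of_le h3]
    _ = ∫ ψ in Ioc 0 (π / 3), ∫ u in Ioc 0 (π / 2), kerK ψ * kerM ψ u := hswap.symm
    _ = ∫ ψ in Ioc 0 (π / 3), ψ * kerK ψ := by
        apply setIntegral_congr_fun measurableSet_Ioc
        intro ψ h
        simp only
        rw [← hψ ψ h, intervalIntegral.integral_of_le h2]

lemma integral_log_innerP :
    ∫ u in (0:ℝ)..π / 2, Real.log (innerP (Real.sin u)) = ∫ ψ in (0:ℝ)..π / 3, ψ * kerK ψ := by
  have hp := Real.pi_pos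
  have h2 : (0:ℝ) ≤ π / 2 := by positivity
  have hsin : ∀ u ∈ Ioc 0 (π / 2), 0 < Real.sin u := fun u hu =>
    Real.sin_pos_of_pos_of_lt_pi hu.1 (by linarith [hu.2])
  have hls : IntervalIntegrable (fun u => Real.log (Real.sin u)) volume 0 (π / 2) :=
    intervalIntegrable_log_sin
  have hI2 : IntervalIntegrable (fun u => Real.log 4 + 2 * Real.log (Real.sin u))
      volume 0 (π / 2) := (by simp : IntervalIntegrable _ _ _ _).add (hls.const_mul 2)
  have hcont : ContinuousOn (fun u => Real.log (innerP (Real.sin u))) (Icc 0 (π / 2)) := by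
    apply ContinuousOn.log (continuous_innerP.comp Real.continuous_sin).continuousOn
    intro u hu
    have := innerP_ge (Real.sin u)
      (Real.sin_nonneg_of_nonneg_of_le_pi hu.1 (by linarith [hu.2]))
    simp only [Function.comp]; linarith
  have e : ∫ u in (0:ℝ)..π / 2, (Real.log (innerP (Real.sin u)) - Real.log (4 * Real.sin u ^ 2)) =
      ∫ u in (0:ℝ)..π / 2,
        (Real.log (innerP (Real.sin u)) - (Real.log 4 + 2 * Real.log (Real.sin u))) := by
    apply intervalIntegral.integral_congr_ae
    filter_upwards with u hu
    rw [uIoc_of_le h2] at hu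
    have := hsin u hu
    rw [Real.log_mul (by norm_num) (by positivity), Real.log_pow]; norm_num
  rw [← integral_swap, e, intervalIntegral.integral_sub (hcont.intervalIntegrable_of_Icc h2) hI2,
    intervalIntegral.integral_add (by simp) (hls.const_mul 2), intervalIntegral.integral_const_mul,
    integral_log_sin_zero_pi_div_two, show (4:ℝ) = 2 ^ 2 by norm_num, Real.log_pow]
  simp; ring

/-! ### Reduction to the Clausen function -/

lemma intervalIntegrable_log_two_sin (a b : ℝ) :
    IntervalIntegrable (fun t => Real.log (2 * Real.sin (t / 2))) volume a b := by
  have : MeromorphicOn (fun t : ℝ => 2 * Real.sin (t / 2)) (uIcc a b) := by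
    intro t _
    apply AnalyticAt.meromorphicAt
    fun_prop
  exact this.intervalIntegrable_log

/-- The substitution `t = π - 2ψ` gives `(1/2) ∫_{π/3}^π log (2 sin (t/2)) dt`, and the integral over
`[0, π]` vanishes since `Cl₂(π) = 0`. -/
lemma integral_log_two_cos :
    ∫ ψ in (0:ℝ)..π / 3, Real.log (2 * Real.cos ψ) =
      -(1 / 2) * ∫ t in (0:ℝ)..π / 3, Real.log (2 * Real.sin (t / 2)) := by
  have h := intervalIntegral.integral_comp_sub_mul (a := 0) (b := π / 3)
    (fun t => Real.log (2 * Real.sin (t / 2))) (two_ne_zero) π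
  have e : ∀ x : ℝ, Real.sin ((π - 2 * x) / 2) = Real.cos x := by
    intro x; rw [← Real.sin_pi_div_two_sub]; congr 1; ring
  simp only [e] at h
  rw [h, show π - 2 * (π / 3) = π / 3 by ring, show π - 2 * 0 = π by ring]
  have hpi := clausen π Real.pi_pos.le le_rfl
  have hz : ∑' n : ℕ, Real.sin (n * π) / (n : ℝ) ^ 2 = 0 := by simp [Real.sin_nat_mul_pi]
  rw [hz] at hpi
  have hadd := intervalIntegral.integral_add_adjacent_intervals
    (intervalIntegrable_log_two_sin 0 (π / 3)) (intervalIntegrable_log_two_sin (π / 3) π)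
  rw [smul_eq_mul]
  linarith

/-- Integration by parts; the boundary terms vanish at both ends. -/
lemma integral_mul_kerK :
    ∫ ψ in (0:ℝ)..π / 3, ψ * kerK ψ =
      -(5 / 2) * ∫ t in (0:ℝ)..π / 3, Real.log (2 * Real.sin (t / 2)) := by
  have hp := Real.pi_pos
  have h3 : (0:ℝ) ≤ π / 3 := by positivity
  have hcos : ∀ ψ ∈ Icc 0 (π / 3), 0 < Real.cos ψ := fun ψ hψ =>
    Real.cos_pos_of_mem_Ioo ⟨by linarith [hψ.1], by linarith [hψ.2]⟩
  have hsin : ∀ ψ ∈ Ioc 0 (π / 3), 0 < Real.sin (ψ / 2) := fun ψ hψ =>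
    Real.sin_pos_of_pos_of_lt_pi (by linarith [hψ.1]) (by linarith [hψ.2])
  set W : ℝ → ℝ := fun ψ =>
    ψ * (2 * Real.log (2 * Real.sin (ψ / 2)) - Real.log (2 * Real.cos ψ)) with hW
  have hcont : ContinuousOn W (Icc 0 (π / 3)) := by
    have hc : ContinuousOn (fun ψ => 2 * (ψ * Real.log ψ) + 2 * (ψ * Real.log (Real.sinc (ψ / 2)))
        - ψ * Real.log (2 * Real.cos ψ)) (Icc 0 (π / 3)) := by
      apply ContinuousOn.sub
      · apply ContinuousOn.add
        · exact (Real.continuous_mul_log.const_mul 2).continuousOn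
        · exact continuousOn_const.mul (continuousOn_id.mul (ContinuousOn.log
            (Real.continuous_sinc.comp (by fun_prop)).continuousOn
            fun ψ hψ => (sinc_half_pos hψ).ne'))
      · refine continuousOn_id.mul (ContinuousOn.log (by fun_prop) fun ψ hψ => ?_)
        have := hcos ψ hψ
        positivity
    refine hc.congr fun ψ hψ => ?_
    rcases hψ.1.eq_or_lt with h0 | h0
    · simp [hW, ← h0]
    · have hs := hsin ψ ⟨h0, hψ.2⟩
      have hsc := sinc_half_pos hψ
      have : 2 * Real.sin (ψ / 2) = ψ * Real.sinc (ψ / 2) := by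
        rw [Real.sinc_of_ne_zero (by positivity)]; field_simp
      simp only [hW, this]
      rw [Real.log_mul h0.ne' hsc.ne']; ring
  have hderiv : ∀ ψ ∈ Ioo 0 (π / 3), HasDerivAt W (ψ * kerK ψ +
      (2 * Real.log (2 * Real.sin (ψ / 2)) - Real.log (2 * Real.cos ψ))) ψ := by
    intro ψ hψ
    have hψ' : ψ ∈ Ioc 0 (π / 3) := ⟨hψ.1, hψ.2.le⟩
    have hs := hsin ψ hψ'
    have hc := hcos ψ ⟨hψ.1.le, hψ.2.le⟩
    have d1 := ((((hasDerivAt_id ψ).div_const 2).sin.const_mul 2).log (by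
      simp only [id]; positivity)).const_mul 2
    have d2 := ((Real.hasDerivAt_cos ψ).const_mul 2).log (by positivity)
    refine ((hasDerivAt_id ψ).mul (d1.sub d2)).congr_deriv ?_
    rw [mul_kerK_eq hψ', Real.sinc_of_ne_zero (by linarith [hψ.1])]
    have hne := hψ.1.ne'
    simp only [id, Pi.sub_apply]
    field_simp
    ring
  have hIs := intervalIntegrable_log_two_sin 0 (π / 3)
  have hIc : IntervalIntegrable (fun ψ => Real.log (2 * Real.cos ψ)) volume 0 (π / 3) := by
    apply ContinuousOn.intervalIntegrable_of_Icc h3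
    refine ContinuousOn.log (by fun_prop) fun ψ hψ => ?_
    have := hcos ψ hψ
    positivity
  have hIK := intervalIntegrable_mul_kerK
  have h := intervalIntegral.integral_eq_sub_of_hasDerivAt_of_le h3 hcont hderiv
    (hIK.add ((hIs.const_mul 2).sub hIc))
  rw [intervalIntegral.integral_add hIK ((hIs.const_mul 2).sub hIc),
    intervalIntegral.integral_sub (hIs.const_mul 2) hIc, intervalIntegral.integral_const_mul,
    integral_log_two_cos] at h
  have hW1 : W (π / 3) = 0 := by
    simp only [hW]
    rw [show π / 3 / 2 = π / 6 by ring, Real.sin_pi_div_six, Real.cos_pi_div_three]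
    norm_num
  have hW0 : W 0 = 0 := by simp [hW]
  rw [hW1, hW0] at h
  linarith

/-- The spanning tree constant of the triangular lattice equals `(15√3/(4π))·L₋₃(2)`. -/
theorem triangular_lattice_spanning_tree_constant :
    (1 / (4 * π ^ 2)) *
      ∫ k₁ in (-π)..π, (∫ k₂ in (-π)..π,
        Real.log (6 - 2 * (Real.cos k₁ + Real.cos k₂ + Real.cos (k₁ + k₂)))) =
    (15 * Real.sqrt 3 / (4 * π)) * Lm3 := by
  have hp := Real.pi_pos
  have hC := clausen (π / 3) (by positivity) (by linarith)
  rw [clausen_pi_div_three] at hC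
  rw [outer_integral, integral_log_innerP, integral_mul_kerK]
  have : ∫ t in (0:ℝ)..π / 3, Real.log (2 * Real.sin (t / 2)) = -(3 * √3 / 4 * Lm3) := by linarith
  rw [this]
  field_simp
  ring
end

section
/- ∑_{m=1}^∞ (1/m)·C(2m,m)²·(1/16)^m = log 16 − 8G/π, where C(2m,m) is the central binomial coefficient and G is Catalan's constant. -/
/-!
Put `a n = C(2n,n) / 4ⁿ`, so that the series is `∑_{m≥1} a m ^ 2 / m`. One factor `a m` is Wallis'
integral `(2/π) ∫₀^{π/2} sin^{2m} θ dθ` (`integral_sin_pow_eq_wallisCoeff`). Exchanging sum and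
integral leaves the integral over `θ` of the generating function
`∑_{m≥1} a m y^m / m = -2 log ((1 + √(1 - y)) / 2)` (`hasSum_wallisCoeff_div`) at `y = sin² θ`; the
latter comes from the binomial series `∑ a n yⁿ = (1 - y)^{-1/2}`. The exchange is legitimate because
`a m ^ 2 ≤ 1 / (2m + 1)`.

Since `(1 + cos θ) / 2 = cos² (θ/2)`, it remains to compute `∫₀^{π/4} log cos`. Its sum with
`∫₀^{π/4} log sin` is Euler's integral `∫₀^{π/2} log sin = -(π/2) log 2`, and the difference
`∫₀^{π/4} log tan` equals `-G` (`integral_log_tan`), because `u log (tan u) - Ti₂ (tan u)` is an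
antiderivative of `log (tan u)`, where `Ti₂ t = ∑ (-1)ⁿ t^{2n+1} / (2n+1)²` is the inverse tangent
integral, with `Ti₂' t = arctan t / t` and `Ti₂ 1 = G`.
-/

open Real

open Filter Topology MeasureTheory intervalIntegral

/-- The normalized central binomial coefficient `C(2n,n) / 4ⁿ`. -/
noncomputable def wallisCoeff (n : ℕ) : ℝ := (n.centralBinom : ℝ) / 4 ^ n

lemma wallisCoeff_zero : wallisCoeff 0 = 1 := by simp [wallisCoeff]

lemma wallisCoeff_nonneg (n : ℕ) : 0 ≤ wallisCoeff n := by unfold wallisCoeff; positivity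

lemma wallisCoeff_succ (n : ℕ) :
    wallisCoeff (n + 1) = (2 * n + 1) / (2 * n + 2) * wallisCoeff n := by
  have h : ((n : ℝ) + 1) * ((n + 1).centralBinom : ℝ) = 2 * (2 * n + 1) * n.centralBinom := by
    exact_mod_cast Nat.succ_mul_centralBinom_succ n
  unfold wallisCoeff
  rw [pow_succ]
  field_simp
  linarith

lemma wallisCoeff_le_one (n : ℕ) : wallisCoeff n ≤ 1 := by
  unfold wallisCoeff
  rw [div_le_one (by positivity)]
  exact_mod_cast Nat.centralBinom_le_four_pow n

lemma wallisCoeff_sq_mul_le (n : ℕ) : wallisCoeff n ^ 2 * (2 * n + 1) ≤ 1 := by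
  induction n with
  | zero => simp [wallisCoeff_zero]
  | succ n ih =>
    rw [wallisCoeff_succ]
    have : ((2 * (n:ℝ) + 1) / (2 * n + 2) * wallisCoeff n) ^ 2 * (2 * ((n + 1 : ℕ) : ℝ) + 1)
        = ((2 * n + 1) * (2 * n + 3) / (2 * n + 2) ^ 2) * (wallisCoeff n ^ 2 * (2 * n + 1)) := by
      push_cast; field_simp; ring
    rw [this]
    refine mul_le_one₀ ?_ (by positivity) ih
    rw [div_le_one (by positivity)]
    nlinarith

lemma integral_sin_pow_eq_wallisCoeff (n : ℕ) :
    ∫ θ in (0 : ℝ)..(π / 2), sin θ ^ (2 * n) = π / 2 * wallisCoeff n := by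
  induction n with
  | zero => simp [wallisCoeff_zero]
  | succ n ih =>
    rw [show 2 * (n + 1) = 2 * n + 2 by ring, integral_sin_pow, ih, wallisCoeff_succ]
    simp
    ring

/-- The coefficients of the binomial series for the exponent `-1/2`. -/
lemma ringChoose_neg_half (n : ℕ) :
    Ring.choose (-(1 / 2) : ℝ) n = (-1) ^ n * wallisCoeff n := by
  induction n with
  | zero => simp [wallisCoeff_zero]
  | succ n ih =>
    rw [Ring.choose_eq_smul] at ih ⊢
    rw [descPochhammer_succ_right, Polynomial.smeval_mul, Nat.factorial_succ]
    have hf : (n.factorial : ℝ) ≠ 0 := by positivity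
    simp only [smul_eq_mul] at ih ⊢
    rw [inv_mul_eq_iff_eq_mul₀ hf] at ih
    rw [ih, wallisCoeff_succ]
    simp [Polynomial.smeval_natCast]
    field_simp
    ring

lemma hasSum_wallisCoeff {y : ℝ} (hy : |y| < 1) :
    HasSum (fun n => wallisCoeff n * y ^ n) (1 / √(1 - y)) := by
  have h := (one_add_rpow_hasFPowerSeriesOnBall_zero (a := -(1 / 2))).hasSum (y := -y)
    (by simpa [← ENNReal.ofReal_one, Metric.eball_ofReal] using hy)
  convert! h using 1
  · ext n
    simp [binomialSeries, FormalMultilinearSeries.ofScalars]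
    have := ringChoose_neg_half n
    rw [one_div] at this
    rw [this, neg_pow y, mul_mul_mul_comm, ← mul_pow]
    simp
  · rw [rpow_neg, sqrt_eq_rpow]
    · simp [sub_eq_add_neg]
    · grind [abs_lt]

/-- Both sides vanish at `0` and have the same derivative on `(0, y)`, namely
`(1 / √(1 - x) - 1) / x = 1 / (√(1 - x) (1 + √(1 - x)))`. -/
lemma hasSum_wallisCoeff_div {y : ℝ} (h0 : 0 ≤ y) (h1 : y < 1) :
    HasSum (fun n : ℕ => wallisCoeff (n + 1) * y ^ (n + 1) / (n + 1))
      (-2 * log ((1 + √(1 - y)) / 2)) := by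
  obtain rfl | hpos := h0.eq_or_lt
  · simp [hasSum_zero]
  obtain ⟨r, hyr, hr1⟩ := exists_between h1
  have hr0 : 0 < r := h0.trans_lt hyr
  set f : ℕ → ℝ → ℝ := fun n x => wallisCoeff (n + 1) * x ^ (n + 1) / (n + 1) with hf
  have hsumm : Summable fun n : ℕ => r ^ n := summable_geometric_of_lt_one hr0.le hr1
  have hb : ∀ (n : ℕ) x, x ∈ Set.Ioo (-r) r → ‖wallisCoeff (n + 1) * x ^ n‖ ≤ r ^ n := by
    intro n x hx
    rw [norm_mul, norm_pow, Real.norm_of_nonneg (wallisCoeff_nonneg _)]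
    have : ‖x‖ ≤ r := (abs_lt.2 hx).le
    calc _ ≤ 1 * r ^ n := by gcongr; exact wallisCoeff_le_one _
      _ = _ := one_mul _
  have hd : ∀ x ∈ Set.Ioo (-r) r,
      HasDerivAt (fun z => ∑' n, f n z) (∑' n : ℕ, wallisCoeff (n + 1) * x ^ n) x := by
    intro x hx
    refine hasDerivAt_tsum_of_isPreconnected hsumm isOpen_Ioo isPreconnected_Ioo ?_ hb
      (y₀ := 0) (by simp [hr0]) (by simp [hf]) hx
    intro n x _
    have := (((hasDerivAt_id x).fun_pow (n + 1)).const_mul (wallisCoeff (n + 1))).div_const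
      ((n : ℝ) + 1)
    convert! this using 1
    simp
    field_simp
  have hR : ∀ x, x < 1 → HasDerivAt (fun z => -2 * log ((1 + √(1 - z)) / 2))
      (1 / (√(1 - x) * (1 + √(1 - x)))) x := by
    intro x hx
    have hs : 0 < √(1 - x) := sqrt_pos.2 (by linarith)
    have := (((((((hasDerivAt_id x).const_sub 1).sqrt (by simp; linarith)).const_add 1).div_const
      2).log (by simp; positivity)).const_mul (-2))
    convert! this using 1
    simp
    field_simp
  have hD : ∀ x ∈ Set.Ioo 0 y,
      ∑' n : ℕ, wallisCoeff (n + 1) * x ^ n = 1 / (√(1 - x) * (1 + √(1 - x))) := by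
    rintro x ⟨hx0, hxy⟩
    have hs : 0 < √(1 - x) := sqrt_pos.2 (by linarith)
    have hsq : √(1 - x) ^ 2 = 1 - x := sq_sqrt (by linarith)
    have h := hasSum_wallisCoeff (y := x) (by rw [abs_of_pos hx0]; linarith)
    rw [← hasSum_nat_add_iff' 1] at h
    have h2 := h.div_const x
    simp only [pow_succ, ← mul_assoc, mul_div_cancel_right₀ _ hx0.ne'] at h2
    rw [h2.tsum_eq]
    simp [wallisCoeff_zero]
    field_simp
    linear_combination -hsq
  have hcont : ContinuousOn (fun z => (∑' n, f n z) - -2 * log ((1 + √(1 - z)) / 2))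
      (Set.Icc 0 y) := fun x hx =>
    ((hd x ⟨by linarith [hx.1], by linarith [hx.2]⟩).sub
      (hR x (by linarith [hx.2]))).continuousAt.continuousWithinAt
  obtain ⟨c, hc, hslope⟩ := exists_hasDerivAt_eq_slope _ _ hpos hcont
    (fun x hx => (hd x ⟨by linarith [hx.1], by linarith [hx.2]⟩).sub
      (hR x (by linarith [hx.2])))
  rw [hD c hc, sub_self, eq_comm, div_eq_zero_iff] at hslope
  have hzero : ∑' n, f n 0 = 0 := by simp [hf]
  simp only [hzero] at hslope
  have heq : ∑' n, f n y = -2 * log ((1 + √(1 - y)) / 2) := by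
    rcases hslope with h | h
    · norm_num at h; linarith
    · linarith
  rw [← heq]
  refine (Summable.of_norm_bounded hsumm fun n => ?_).hasSum
  have h := hb n y ⟨by linarith, hyr⟩
  have : wallisCoeff (n + 1) * y ^ (n + 1) / (n + 1) =
      (wallisCoeff (n + 1) * y ^ n) * (y / (n + 1)) := by ring
  rw [this, norm_mul]
  refine (mul_le_of_le_one_right (norm_nonneg _) ?_).trans h
  rw [Real.norm_of_nonneg (by positivity), div_le_one (by positivity)]
  have : (0:ℝ) ≤ n := n.cast_nonneg
  linarith

/-- The inverse tangent integral `Ti₂ t = ∑ (-1)ⁿ t^{2n+1} / (2n+1)²`, meaningful for `|t| ≤ 1`. -/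
noncomputable def inverseTangentIntegral (t : ℝ) : ℝ :=
  ∑' n : ℕ, (-1 : ℝ) ^ n * t ^ (2 * n + 1) / (2 * (n : ℝ) + 1) ^ 2

lemma inverseTangentIntegral_zero : inverseTangentIntegral 0 = 0 := by simp [inverseTangentIntegral]

lemma inverseTangentIntegral_one : inverseTangentIntegral 1 = catalanG := by
  simp [inverseTangentIntegral, catalanG]

lemma summable_inv_odd_sq : Summable fun n : ℕ => 1 / (2 * (n : ℝ) + 1) ^ 2 := by
  have h := (summable_nat_add_iff 1).2 (Real.summable_one_div_nat_pow.2 one_lt_two)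
  refine h.of_nonneg_of_le (fun n => by positivity) fun n => ?_
  push_cast
  gcongr
  have : (0:ℝ) ≤ n := n.cast_nonneg
  linarith

lemma continuousOn_inverseTangentIntegral :
    ContinuousOn inverseTangentIntegral (Set.Icc (-1) 1) := by
  refine continuousOn_tsum (fun n => by fun_prop) summable_inv_odd_sq fun n t ht => ?_
  rw [norm_div, norm_mul, norm_pow, norm_pow, norm_neg, norm_one, one_pow, one_mul,
    Real.norm_of_nonneg (by positivity : (0:ℝ) ≤ (2 * (n : ℝ) + 1) ^ 2)]
  gcongr
  exact pow_le_one₀ (norm_nonneg _) (abs_le.2 ht)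

lemma hasDerivAt_inverseTangentIntegral {t : ℝ} (h0 : 0 < t) (h1 : t < 1) :
    HasDerivAt inverseTangentIntegral (arctan t / t) t := by
  obtain ⟨r, htr, hr1⟩ := exists_between h1
  have hr0 : 0 < r := h0.trans htr
  have hsumm : Summable fun n : ℕ => r ^ n := summable_geometric_of_lt_one hr0.le hr1
  have hsum : HasSum (fun n : ℕ => (-1 : ℝ) ^ n * t ^ (2 * n) / (2 * (n : ℝ) + 1))
      (arctan t / t) := by
    convert! (Real.hasSum_arctan (x := t) (by rwa [Real.norm_of_nonneg h0.le])).div_const t using 2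
    push_cast
    field_simp
    ring
  rw [← hsum.tsum_eq]
  refine hasDerivAt_tsum_of_isPreconnected hsumm (isOpen_Ioo (a := -r) (b := r)) isPreconnected_Ioo
    (g' := fun (n : ℕ) t => (-1 : ℝ) ^ n * t ^ (2 * n) / (2 * (n : ℝ) + 1))
    ?_ ?_ (y₀ := 0) (by simp [hr0]) (by simp) ⟨by linarith, htr⟩
  · intro n x _
    have := (((hasDerivAt_id x).fun_pow (2 * n + 1)).const_mul ((-1 : ℝ) ^ n)).div_const
      ((2 * (n : ℝ) + 1) ^ 2)
    convert! this using 1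
    simp
    field_simp
  · intro n x hx
    have hxr : ‖x‖ ≤ r := (abs_lt.2 hx).le
    rw [norm_div, norm_mul, norm_pow, norm_pow, norm_neg, norm_one, one_pow, one_mul,
      Real.norm_of_nonneg (by positivity : (0:ℝ) ≤ 2 * (n : ℝ) + 1)]
    calc ‖x‖ ^ (2 * n) / (2 * (n : ℝ) + 1) ≤ ‖x‖ ^ (2 * n) :=
          div_le_self (by positivity) (by have : (0:ℝ) ≤ n := n.cast_nonneg
                                          linarith)
      _ ≤ ‖x‖ ^ n := pow_le_pow_of_le_one (norm_nonneg _) (by linarith) (by lia)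
      _ ≤ r ^ n := by gcongr

/-- The integral of `log tan`, by the antiderivative `u log (tan u) - Ti₂ (tan u)`. -/
lemma integral_log_tan :
    ∫ u in (0 : ℝ)..(π / 4), (log (sin u) - log (cos u)) = -catalanG := by
  have hpi := pi_pos
  have hcos : ∀ u ∈ Set.Icc 0 (π / 4), 0 < cos u := fun u hu =>
    cos_pos_of_mem_Ioo ⟨by linarith [hu.1], by linarith [hu.2]⟩
  have htan : ∀ u ∈ Set.Icc 0 (π / 4), 0 ≤ tan u ∧ tan u ≤ 1 := fun u hu => by
    refine ⟨tan_nonneg_of_nonneg_of_le_pi_div_two hu.1 (by linarith [hu.2]), ?_⟩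
    rw [← tan_pi_div_four]
    exact strictMonoOn_tan.monotoneOn ⟨by linarith [hu.1], by linarith [hu.2]⟩
      ⟨by linarith, by linarith⟩ hu.2
  have hTcont : ContinuousOn tan (Set.Icc 0 (π / 4)) :=
    continuousOn_tan.mono fun u hu => (hcos u hu).ne'
  -- at `0`: `|u log (tan u)| ≤ |tan u log (tan u)|`, and `x log x` is continuous
  have hlogcont : ContinuousOn (fun u => u * log (tan u)) (Set.Icc 0 (π / 4)) := by
    intro u hu
    rcases hu.1.eq_or_lt with rfl | hpos
    · have hg : Tendsto (fun u => tan u * log (tan u)) (𝓝[Set.Icc 0 (π / 4)] 0) (𝓝 0) := by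
        have := (continuous_mul_log.comp_continuousOn hTcont) 0 hu
        simpa [ContinuousWithinAt, Function.comp_def] using this
      have : Tendsto (fun u => u * log (tan u)) (𝓝[Set.Icc 0 (π / 4)] 0) (𝓝 0) := by
        refine squeeze_zero_norm' ?_ (by simpa using hg.norm)
        filter_upwards [self_mem_nhdsWithin] with u hu
        rw [norm_mul, Real.norm_eq_abs, Real.norm_eq_abs]
        refine mul_le_mul_of_nonneg_right ?_ (abs_nonneg _)
        rw [abs_of_nonneg hu.1, abs_of_nonneg (htan u hu).1]
        exact le_tan hu.1 (by linarith [hu.2])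
      simpa [ContinuousWithinAt] using this
    · have : tan u ≠ 0 := (tan_pos_of_pos_of_lt_pi_div_two hpos (by linarith [hu.2])).ne'
      exact continuousWithinAt_id.mul ((hTcont u hu).log this)
  have hcont : ContinuousOn (fun u => u * log (tan u) - inverseTangentIntegral (tan u))
      (Set.Icc 0 (π / 4)) :=
    hlogcont.sub (continuousOn_inverseTangentIntegral.comp hTcont fun u hu =>
      ⟨by linarith [(htan u hu).1], (htan u hu).2⟩)
  have hint : IntervalIntegrable (fun u => log (sin u) - log (cos u)) volume 0 (π / 4) :=
    intervalIntegrable_log_sin.sub intervalIntegrable_log_cos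
  rw [integral_eq_sub_of_hasDerivAt_of_le (by positivity) hcont ?_ hint]
  · simp [inverseTangentIntegral_zero, inverseTangentIntegral_one]
  · intro u hu
    have hu' := Set.Ioo_subset_Icc_self hu
    have hc := hcos u hu'
    have hs : 0 < sin u := sin_pos_of_pos_of_lt_pi hu.1 (by linarith [hu.2])
    have ht0 : 0 < tan u := tan_pos_of_pos_of_lt_pi_div_two hu.1 (by linarith [hu.2])
    have ht1 : tan u < 1 := by
      rw [← tan_pi_div_four]
      exact strictMonoOn_tan ⟨by linarith [hu.1], by linarith [hu.2]⟩
        ⟨by linarith, by linarith⟩ hu.2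
    have hT := hasDerivAt_tan hc.ne'
    have h := ((hasDerivAt_id u).mul (hT.log ht0.ne')).sub
      ((hasDerivAt_inverseTangentIntegral ht0 ht1).comp u hT)
    convert! h using 1
    rw [arctan_tan (by linarith [hu.1]) (by linarith [hu.2])]
    rw [tan_eq_sin_div_cos, log_div hs.ne' hc.ne']
    simp
    field_simp
    ring

lemma integral_log_cos_pi_div_four :
    ∫ u in (0 : ℝ)..(π / 4), log (cos u) = catalanG / 2 - π / 4 * log 2 := by
  have h1 := integral_log_tan
  rw [intervalIntegral.integral_sub (f := fun u => log (sin u)) (g := fun u => log (cos u))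
    intervalIntegrable_log_sin intervalIntegrable_log_cos] at h1
  have h2 : ∫ u in (π / 4)..(π / 2), log (sin u) = ∫ u in (0 : ℝ)..(π / 4), log (cos u) := by
    simp_rw [← sin_pi_div_two_sub]
    rw [intervalIntegral.integral_comp_sub_left (fun x => log (sin x))]
    congr 1 <;> ring
  have h3 := intervalIntegral.integral_add_adjacent_intervals (a := 0) (b := π / 4) (c := π / 2)
    (f := fun u => log (sin u)) (μ := volume) intervalIntegrable_log_sin intervalIntegrable_log_sin
  rw [integral_log_sin_zero_pi_div_two, h2] at h3
  linarith

lemma integral_log_one_add_cos :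
    ∫ θ in (0 : ℝ)..(π / 2), -2 * log ((1 + cos θ) / 2) = 2 * π * log 2 - 4 * catalanG := by
  have h : ∀ θ : ℝ, -2 * log ((1 + cos θ) / 2) = -4 * log (cos (θ / 2)) := fun θ => by
    rw [show (1 + cos θ) / 2 = cos (θ / 2) ^ 2 by rw [cos_sq]; ring_nf, log_pow]
    push_cast
    ring
  simp_rw [h]
  rw [intervalIntegral.integral_const_mul,
    intervalIntegral.integral_comp_div (fun u => log (cos u)) two_ne_zero, zero_div,
    show π / 2 / 2 = π / 4 by ring, integral_log_cos_pi_div_four, smul_eq_mul]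
  ring

lemma summable_wallisCoeff_sq_div :
    Summable fun m : ℕ => wallisCoeff (m + 1) ^ 2 / ((m : ℝ) + 1) := by
  have h := (summable_nat_add_iff 1).2 (Real.summable_one_div_nat_pow.2 one_lt_two)
  refine h.of_nonneg_of_le (fun m => by positivity) fun m => ?_
  have h1 := wallisCoeff_sq_mul_le (m + 1)
  push_cast at h1 ⊢
  rw [div_le_div_iff₀ (by positivity) (by positivity)]
  have h2 : wallisCoeff (m + 1) ^ 2 * ((m : ℝ) + 1) ≤ 1 := by
    refine le_trans ?_ h1
    gcongr
    have : (0:ℝ) ≤ m := m.cast_nonneg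
    linarith
  have : (0:ℝ) ≤ (m : ℝ) + 1 := by positivity
  nlinarith

/-- Ramanujan's series `∑_{m≥1} (1/m)·C(2m,m)²·16^{−m} = log 16 − 8G/π`. -/
theorem ramanujan_central_binomial_series :
    ∑' m : ℕ, (1 / ((m : ℝ) + 1)) * (((2 * (m + 1)).choose (m + 1) : ℝ)) ^ 2 *
        (1 / 16 : ℝ) ^ (m + 1) =
    Real.log 16 - 8 * catalanG / π := by
  have hpi := pi_pos
  set F : ℕ → ℝ → ℝ := fun m θ => wallisCoeff (m + 1) * sin θ ^ (2 * (m + 1)) / (m + 1) with hF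
  have hF0 : ∀ m θ, 0 ≤ F m θ := fun m θ => by
    have := wallisCoeff_nonneg (m + 1)
    have := (even_two_mul (m + 1)).pow_nonneg (sin θ)
    positivity
  have hFint : ∀ m, ∫ θ in Set.Ioc 0 (π / 2), F m θ =
      π / 2 * (wallisCoeff (m + 1) ^ 2 / ((m : ℝ) + 1)) := fun m => by
    rw [← intervalIntegral.integral_of_le (by positivity)]
    simp only [hF]
    rw [intervalIntegral.integral_div, intervalIntegral.integral_const_mul,
      integral_sin_pow_eq_wallisCoeff]
    ring
  have hswap := hasSum_integral_of_summable_integral_norm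
    (μ := volume.restrict (Set.Ioc 0 (π / 2))) (F := F)
    (fun m => by
      have : Continuous (F m) := by fun_prop
      exact (this.intervalIntegrable 0 (π / 2)).1)
    (by
      simp_rw [Real.norm_of_nonneg (hF0 _ _), hFint]
      exact summable_wallisCoeff_sq_div.mul_left _)
  simp_rw [hFint] at hswap
  -- the closed form of the sum holds on `(0, π / 2)`, hence almost everywhere
  have hclosed : ∫ θ in Set.Ioc 0 (π / 2), ∑' m, F m θ = 2 * π * log 2 - 4 * catalanG := by
    rw [← integral_log_one_add_cos, intervalIntegral.integral_of_le (by positivity),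
      integral_Ioc_eq_integral_Ioo, integral_Ioc_eq_integral_Ioo]
    refine setIntegral_congr_fun measurableSet_Ioo fun θ hθ => ?_
    have hc : 0 < cos θ := cos_pos_of_mem_Ioo ⟨by linarith [hθ.1], hθ.2⟩
    have h := hasSum_wallisCoeff_div (y := sin θ ^ 2) (sq_nonneg _)
      (by nlinarith [sin_sq_add_cos_sq θ])
    rw [show 1 - sin θ ^ 2 = cos θ ^ 2 by rw [← cos_sq'], sqrt_sq hc.le] at h
    simp only [← pow_mul] at h
    exact h.tsum_eq
  rw [hclosed] at hswap
  have hterm : ∀ m : ℕ, (1 / ((m : ℝ) + 1)) * (((2 * (m + 1)).choose (m + 1) : ℝ)) ^ 2 *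
      (1 / 16 : ℝ) ^ (m + 1) = wallisCoeff (m + 1) ^ 2 / ((m : ℝ) + 1) := fun m => by
    rw [wallisCoeff, Nat.centralBinom_eq_two_mul_choose, one_div_pow,
      show (16 : ℝ) ^ (m + 1) = (4 ^ (m + 1)) ^ 2 by rw [pow_right_comm]; norm_num]
    field_simp
  simp_rw [hterm]
  have h := hswap.tsum_eq
  rw [tsum_mul_left] at h
  rw [show (16 : ℝ) = 2 ^ 4 by norm_num, log_pow]
  push_cast
  field_simp at h ⊢
  linarith
end

section
/- log(2/3) + ∑_{n=1}^∞ (1/n)·(1/9)ⁿ·∑_{j=0}^n C(2j,j)·C(n,j)² = ∑_{n=1}^∞ (1/n)·(1/6)ⁿ·∑_{j=0}^n (−3)^{n−j}·C(n,j)·∑_{k=0}^j C(j,k)²·C(2k,k). -/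
/-!
The honeycomb numbers `a n = ∑ j, C(2j,j) C(n,j)²` are the moments of a bounded function: with
`p (α, θ) = 1 + 4 sin θ cos α + 4 sin² θ` on the rectangle `(0, 2π] × (0, π]`, the mean of `p ^ n`
is `a n`. Averaging over `α` is Parseval's identity for `(1 + 2 sin θ e^{iα})^n`, and averaging
`(2 sin θ)^(2j)` over `θ` is the Wallis integral `C(2j,j)`. By the binomial theorem the inner sum
on the right-hand side is the mean of `(p - 3)^n`.

Summing the logarithmic series under the integral sign, the left-hand series is the mean of
`-log (1 - p/9)` and the right-hand one is the mean of `-log (1 - (p - 3)/6)`. Both arguments are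
`9 - p` up to a factor, `1 - (p - 3)/6 = (3/2) (1 - p/9)`, so the two means differ by `log (3/2)`.

The interchange of sum and integral is by dominated convergence (`hasSum_integral_log`). It rests
on `9 - p ≥ 2 sin² α`: both `|p/9|` and `|(p - 3)/6|` are at most `1 - (2/9) sin² α`, so the series
are dominated by `-log ((2/9) sin² α)`, which is integrable because `log ∘ sin` is.
-/

open Real Finset MeasureTheory

lemma integral_two_mul_sin_pow (n : ℕ) :
    ∫ t in (0:ℝ)..π, (2 * sin t) ^ (2 * n) = π * ((2 * n).choose n : ℝ) := by
  have key : ∀ n : ℕ, (4:ℝ) ^ n * ∏ i ∈ range n, (2 * (i:ℝ) + 1) / (2 * i + 2) =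
       ((2 * n).choose n : ℝ) := by
    intro n
    induction n with
    | zero => simp
    | succ k ih =>
      have h := Nat.succ_mul_centralBinom_succ k
      simp only [Nat.centralBinom] at h
      have h' : ((k:ℝ) + 1) * ((2 * (k + 1)).choose (k + 1) : ℝ) =
          2 * (2 * k + 1) * ((2 * k).choose k : ℝ) := by
        exact_mod_cast h
      rw [prod_range_succ, pow_succ]
      have hk : (k:ℝ) + 1 ≠ 0 := by positivity
      apply mul_left_cancel₀ hk
      rw [h', ← ih]
      field_simp
      ring
  simp_rw [mul_pow, intervalIntegral.integral_const_mul, integral_sin_pow_even]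
  rw [← key n, pow_mul]
  norm_num
  ring

/-- Orthogonality of the characters `e^{ija}` on the circle. -/
lemma integral_exp_pow_mul_exp_neg_pow (j k : ℕ) :
    ∫ a in (0:ℝ)..(2 * π),
      (Complex.exp (a * Complex.I)) ^ j * (Complex.exp (-(a * Complex.I))) ^ k
    = if j = k then (2 * π : ℂ) else 0 := by
  have h1 : ∀ a : ℝ, (Complex.exp (a * Complex.I)) ^ j * (Complex.exp (-(a * Complex.I))) ^ k
      = Complex.exp ((((j : ℂ) - k) * Complex.I) * a) := by
    intro a
    rw [← Complex.exp_nat_mul, ← Complex.exp_nat_mul, ← Complex.exp_add]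
    congr 1; ring
  simp_rw [h1]
  split_ifs with h
  · subst h; simp
  · have hne : ((j : ℂ) - k) * Complex.I ≠ 0 := by
      refine mul_ne_zero (sub_ne_zero.2 ?_) Complex.I_ne_zero
      exact_mod_cast h
    rw [integral_exp_mul_complex hne]
    have : Complex.exp ((((j : ℂ) - k) * Complex.I) * ((2 * π : ℝ) : ℂ)) = 1 := by
      rw [Complex.exp_eq_one_iff]
      exact ⟨(j : ℤ) - k, by push_cast; ring⟩
    rw [this]; simp

/-- Parseval's identity for `(1 + x e^{ia})^n`, since
`1 + 2 x cos a + x² = (1 + x e^{ia}) (1 + x e^{-ia})`. -/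
lemma integral_one_add_cos_pow (x : ℝ) (n : ℕ) :
    ∫ a in (0:ℝ)..(2 * π), (1 + 2 * x * cos a + x ^ 2) ^ n
      = 2 * π * ∑ j ∈ range (n + 1), (n.choose j : ℝ) ^ 2 * x ^ (2 * j) := by
  have h : ∀ a : ℝ, (((1 + 2 * x * cos a + x ^ 2) ^ n : ℝ) : ℂ)
      = ∑ j ∈ range (n + 1), ∑ k ∈ range (n + 1),
        ((x : ℂ) ^ j * n.choose j * (x ^ k * n.choose k)) *
        ((Complex.exp (a * Complex.I)) ^ j * (Complex.exp (-(a * Complex.I))) ^ k) := by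
    intro a
    have hz : Complex.exp (a * Complex.I) * Complex.exp (-(a * Complex.I)) = 1 := by
      rw [← Complex.exp_add]; simp
    have hc : (cos a : ℂ) = (Complex.exp (a * Complex.I) + Complex.exp (-(a * Complex.I))) / 2 := by
      rw [Complex.ofReal_cos, Complex.cos]; ring_nf
    have : ((1 + 2 * x * cos a + x ^ 2 : ℝ) : ℂ)
      = (x * Complex.exp (a * Complex.I) + 1) * (x * Complex.exp (-(a * Complex.I)) + 1) := by
      push_cast
      rw [← Complex.ofReal_cos, hc]
      linear_combination (-(x:ℂ) ^ 2) * hz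
    rw [Complex.ofReal_pow, this, mul_pow, add_pow, add_pow, sum_mul_sum]
    refine sum_congr rfl fun j _ => sum_congr rfl fun k _ => ?_
    simp only [one_pow, mul_pow]; ring
  apply Complex.ofReal_injective
  rw [← intervalIntegral.integral_ofReal]
  simp_rw [h]
  have hcont : ∀ j k : ℕ, Continuous fun a : ℝ =>
        ((x : ℂ) ^ j * n.choose j * (x ^ k * n.choose k)) *
        ((Complex.exp (a * Complex.I)) ^ j * (Complex.exp (-(a * Complex.I))) ^ k) := by
    intro j k; fun_prop
  rw [intervalIntegral.integral_finsetSum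
    (fun j _ => (continuous_finsetSum _ fun k _ => hcont j k).intervalIntegrable _ _)]
  push_cast
  rw [mul_sum]
  refine sum_congr rfl fun j hj => ?_
  rw [intervalIntegral.integral_finsetSum (fun k _ => (hcont j k).intervalIntegrable _ _)]
  simp_rw [intervalIntegral.integral_const_mul, integral_exp_pow_mul_exp_neg_pow]
  simp only [mul_ite, mul_zero, sum_ite_eq, hj, if_true]
  ring

/-- Lebesgue measure on the rectangle `(0, 2π] × (0, π]`, not normalised: its mass is `2π²`. -/
noncomputable def rectMeasure : Measure (ℝ × ℝ) :=
  (volume.restrict (Set.Ioc 0 (2 * π))).prod (volume.restrict (Set.Ioc 0 π))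

instance : IsFiniteMeasure rectMeasure := by
  unfold rectMeasure; infer_instance

/-- The structure function of the honeycomb lattice, `|1 + 2 sin θ e^{iα}|²` at `(α, θ)`. -/
noncomputable def honeycombSymbol (z : ℝ × ℝ) : ℝ :=
  1 + 2 * (2 * sin z.2) * cos z.1 + (2 * sin z.2) ^ 2

lemma continuous_honeycombSymbol : Continuous honeycombSymbol := by
  unfold honeycombSymbol; fun_prop

lemma honeycombSymbol_nonneg (z : ℝ × ℝ) : 0 ≤ honeycombSymbol z := by
  unfold honeycombSymbol
  nlinarith [sq_nonneg (2 * sin z.2 + cos z.1), sin_sq_add_cos_sq z.1, sq_nonneg (sin z.1)]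

lemma honeycombSymbol_le (z : ℝ × ℝ) : honeycombSymbol z ≤ 9 - 2 * sin z.1 ^ 2 := by
  unfold honeycombSymbol
  have h1 := sin_sq_add_cos_sq z.1
  have h2 := sin_sq_add_cos_sq z.2
  -- The difference of the two sides is `2 (sin θ - cos α)² + 6 cos² θ`.
  nlinarith [sq_nonneg (sin z.2 - cos z.1), sq_nonneg (cos z.2)]

lemma integrable_of_continuous {f : ℝ × ℝ → ℝ} (hf : Continuous f) : Integrable f rectMeasure := by
  have : IntegrableOn f (Set.Icc 0 (2 * π) ×ˢ Set.Icc 0 π) (volume.prod volume) :=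
    hf.continuousOn.integrableOn_compact (isCompact_Icc.prod isCompact_Icc)
  unfold rectMeasure
  rw [Measure.prod_restrict]
  exact this.mono_set (Set.prod_mono Set.Ioc_subset_Icc_self Set.Ioc_subset_Icc_self)

lemma integral_honeycombSymbol_pow (n : ℕ) :
    ∫ z, honeycombSymbol z ^ n ∂rectMeasure =
      2 * π ^ 2 * ∑ j ∈ range (n + 1), (n.choose j : ℝ) ^ 2 * ((2 * j).choose j : ℝ) := by
  have hint : Integrable (fun z => honeycombSymbol z ^ n) rectMeasure :=
    integrable_of_continuous (continuous_honeycombSymbol.pow n)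
  unfold rectMeasure at hint ⊢
  rw [integral_prod_symm _ hint]
  have h2π : (0:ℝ) ≤ 2 * π := by positivity
  have hin : ∀ t : ℝ, ∫ a in Set.Ioc 0 (2 * π), honeycombSymbol (a, t) ^ n =
      2 * π * ∑ j ∈ range (n + 1), (n.choose j : ℝ) ^ 2 * (2 * sin t) ^ (2 * j) := by
    intro t
    rw [← intervalIntegral.integral_of_le h2π, ← integral_one_add_cos_pow]
    rfl
  simp_rw [hin]
  rw [← intervalIntegral.integral_of_le pi_pos.le, intervalIntegral.integral_const_mul,
    intervalIntegral.integral_finsetSum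
      (fun j _ => Continuous.intervalIntegrable (by fun_prop) _ _)]
  simp_rw [intervalIntegral.integral_const_mul, integral_two_mul_sin_pow]
  rw [mul_sum, mul_sum]
  exact sum_congr rfl fun j _ => by ring

lemma ae_sin_fst_ne_zero : ∀ᵐ z ∂rectMeasure, sin z.1 ≠ 0 := by
  have hc : {x : ℝ | sin x = 0}.Countable := by
    have : {x : ℝ | sin x = 0} = Set.range fun n : ℤ => (n : ℝ) * π := by
      ext x; simp [sin_eq_zero_iff]
    rw [this]; exact Set.countable_range _
  have := hc.ae_notMem (volume.restrict (Set.Ioc 0 (2 * π)))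
  exact Measure.quasiMeasurePreserving_fst.ae this

lemma integrable_log_sin_sq :
    Integrable (fun z : ℝ × ℝ => -log (1 - (1 - 2 / 9 * sin z.1 ^ 2))) rectMeasure := by
  have h1 : Integrable (fun x : ℝ => log (sin x)) (volume.restrict (Set.Ioc 0 (2 * π))) :=
    (intervalIntegrable_log_sin (a := 0) (b := 2 * π)).1
  have h2 : Integrable (fun z : ℝ × ℝ => log (sin z.1)) rectMeasure := h1.comp_fst _
  refine (((integrable_const (log (2 / 9))).add (h2.const_mul 2)).neg).congr ?_
  filter_upwards [ae_sin_fst_ne_zero] with z hz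
  simp only [Pi.neg_apply, Pi.add_apply, sub_sub_cancel]
  rw [log_mul (by norm_num) (pow_ne_zero 2 hz), log_pow]
  norm_num

/-- The Mercator series of `-log (1 - g)` may be integrated term by term when `|g|` is at most
`1 - (2/9) sin² α`; the bound lets `g` approach `1` only on the null set `sin α = 0`. -/
lemma hasSum_integral_log {g : ℝ × ℝ → ℝ} (hg : Continuous g)
    (hb : ∀ z, |g z| ≤ 1 - 2 / 9 * sin z.1 ^ 2) :
    HasSum (fun m : ℕ => ∫ z, g z ^ (m + 1) / ((m : ℝ) + 1) ∂rectMeasure)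
      (∫ z, -log (1 - g z) ∂rectMeasure) := by
  have hw : ∀ᵐ z ∂rectMeasure,
      HasSum (fun m : ℕ => (1 - 2 / 9 * sin z.1 ^ 2) ^ (m + 1) / ((m : ℝ) + 1))
        (-log (1 - (1 - 2 / 9 * sin z.1 ^ 2))) := by
    filter_upwards [ae_sin_fst_ne_zero] with z hz
    apply hasSum_pow_div_log_of_abs_lt_one
    have : 0 < sin z.1 ^ 2 := by positivity
    rw [abs_of_nonneg ((abs_nonneg _).trans (hb z))]
    linarith
  refine hasSum_integral_of_dominated_convergence
    (fun (m : ℕ) z => (1 - 2 / 9 * sin z.1 ^ 2) ^ (m + 1) / ((m : ℝ) + 1)) ?_ ?_ ?_ ?_ ?_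
  · intro m
    exact ((hg.pow _).div_const _).aestronglyMeasurable
  · intro m
    refine Filter.Eventually.of_forall fun z => ?_
    have hm : (0:ℝ) < (m : ℝ) + 1 := by positivity
    rw [norm_div, norm_pow, norm_eq_abs, norm_of_nonneg hm.le]
    have := hb z
    gcongr
  · filter_upwards [hw] with z hz using hz.summable
  · refine integrable_log_sin_sq.congr ?_
    filter_upwards [hw] with z hz using hz.tsum_eq.symm
  · filter_upwards [ae_sin_fst_ne_zero] with z hz
    apply hasSum_pow_div_log_of_abs_lt_one
    have : 0 < sin z.1 ^ 2 := by positivity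
    linarith [hb z]

lemma abs_honeycombSymbol_div_le (z : ℝ × ℝ) :
    |honeycombSymbol z / 9| ≤ 1 - 2 / 9 * sin z.1 ^ 2 := by
  rw [abs_of_nonneg (div_nonneg (honeycombSymbol_nonneg z) (by norm_num))]
  linarith [honeycombSymbol_le z]

lemma abs_honeycombSymbol_sub_div_le (z : ℝ × ℝ) :
    |(honeycombSymbol z - 3) / 6| ≤ 1 - 2 / 9 * sin z.1 ^ 2 := by
  rw [abs_le]
  constructor <;>
    linarith [honeycombSymbol_le z, honeycombSymbol_nonneg z, sin_sq_le_one z.1,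
      sq_nonneg (sin z.1)]

lemma integrable_log_one_sub :
    Integrable (fun z => log (1 - honeycombSymbol z / 9)) rectMeasure := by
  refine integrable_log_sin_sq.mono' ?_ ?_
  · have := continuous_honeycombSymbol.measurable
    exact (measurable_log.comp (by fun_prop)).aestronglyMeasurable
  · filter_upwards [ae_sin_fst_ne_zero] with z hz
    have h0 : 0 < 2 / 9 * sin z.1 ^ 2 := by positivity
    have h1 := honeycombSymbol_le z
    have h2 := honeycombSymbol_nonneg z
    rw [norm_eq_abs, abs_of_nonpos (log_nonpos (by linarith) (by linarith)), sub_sub_cancel]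
    exact neg_le_neg (log_le_log h0 (by linarith))

lemma integral_honeycombSymbol_sub_pow (n : ℕ) :
    ∫ z, (honeycombSymbol z - 3) ^ n ∂rectMeasure =
      2 * π ^ 2 * ∑ j ∈ range (n + 1), (-3 : ℝ) ^ (n - j) * (n.choose j : ℝ) *
        ∑ k ∈ range (j + 1), (j.choose k : ℝ) ^ 2 * ((2 * k).choose k : ℝ) := by
  simp_rw [sub_eq_add_neg, add_pow, mul_assoc]
  have hint : ∀ j ∈ range (n + 1), Integrable
      (fun z => honeycombSymbol z ^ j * ((-3) ^ (n - j) * (n.choose j : ℝ))) rectMeasure :=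
    fun j _ => integrable_of_continuous ((continuous_honeycombSymbol.pow j).mul_const _)
  rw [integral_finsetSum _ hint, mul_sum, mul_sum]
  refine sum_congr rfl fun j _ => ?_
  rw [integral_mul_const, integral_honeycombSymbol_pow]
  ring

lemma integral_log_relation :
    ∫ z, -log (1 - (honeycombSymbol z - 3) / 6) ∂rectMeasure =
      2 * π ^ 2 * log (2 / 3) + ∫ z, -log (1 - honeycombSymbol z / 9) ∂rectMeasure := by
  have hmass : ∫ _z, log (2 / 3) ∂rectMeasure = 2 * π ^ 2 * log (2 / 3) := by
    have := integral_honeycombSymbol_pow 0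
    simp only [pow_zero, integral_const, smul_eq_mul, mul_one] at this
    rw [integral_const, this]
    simp
  have hneg : Integrable (fun z => -log (1 - honeycombSymbol z / 9)) rectMeasure :=
    integrable_log_one_sub.neg
  rw [← hmass, ← integral_add (integrable_const _) hneg]
  refine integral_congr_ae ?_
  filter_upwards [ae_sin_fst_ne_zero] with z hz
  have h0 : 0 < sin z.1 ^ 2 := by positivity
  have h1 := honeycombSymbol_le z
  have h2 : 1 - honeycombSymbol z / 9 = 2 / 3 * (1 - (honeycombSymbol z - 3) / 6) := by ring
  simp only [h2]
  rw [log_mul (by norm_num) (by linarith)]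
  ring

/-- Equality of lattice sums expressing `λ_honeycomb = λ_triangular/2`. -/
theorem honeycomb_triangular_lattice_sum_identity :
    Real.log (2/3) +
      ∑' m : ℕ, (1 / ((m : ℝ) + 1)) * (1/9 : ℝ) ^ (m + 1) *
        ∑ j ∈ Finset.range (m + 2), ((2 * j).choose j : ℝ) * (((m + 1).choose j : ℝ)) ^ 2 =
    ∑' m : ℕ, (1 / ((m : ℝ) + 1)) * (1/6 : ℝ) ^ (m + 1) *
      ∑ j ∈ Finset.range (m + 2), (-3 : ℝ) ^ (m + 1 - j) * ((m + 1).choose j : ℝ) *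
        ∑ k ∈ Finset.range (j + 1), ((j.choose k : ℝ)) ^ 2 * ((2 * k).choose k : ℝ) := by
  have hπ : (2 * π ^ 2 : ℝ) ≠ 0 := by positivity
  have hL := (hasSum_integral_log (continuous_honeycombSymbol.div_const 9)
    abs_honeycombSymbol_div_le).tsum_eq
  have hR := (hasSum_integral_log (g := fun z => (honeycombSymbol z - 3) / 6)
    ((continuous_honeycombSymbol.sub continuous_const).div_const 6)
    abs_honeycombSymbol_sub_div_le).tsum_eq
  rw [integral_log_relation, ← hL] at hR
  apply mul_left_cancel₀ hπ
  rw [mul_add, ← tsum_mul_left, ← tsum_mul_left]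
  refine Eq.trans (congrArg₂ _ rfl (tsum_congr fun m => ?_))
    (hR.symm.trans (tsum_congr fun m => ?_))
  · simp_rw [div_pow, integral_div, integral_honeycombSymbol_pow,
      mul_comm (((2 * _).choose _ : ℕ) : ℝ)]
    rw [one_pow]
    ring
  · simp_rw [div_pow, integral_div, integral_honeycombSymbol_sub_pow]
    rw [one_pow]
    ring
end
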